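/- arXiv:math/0610334 — 2 statements merged into one kernel-verified Lean document; each statement's English description precedes it below -/
import Mathlib

section
/- Let C : X × ℕ × ℤ^d → (subsets of ℤ^d) be measurable and satisfy for all γ, n ≥ 1 and x, y, z ∈ ℤ^d: (i) x ∈ C(γ, n, x); (ii) if C(γ, n, x) ∩ C(γ, n, y) ≠ ∅ then C(γ, n, x) = C(γ, n, y); (iii) C(γ, n, x) ⊆ C(γ, n+1, x); (iv) C(θ^z γ, n, θ^z x) = θ^z C(γ, n, x); and suppose that for ℙ-a.e. γ every C(γ, n, x) is finite and ∪_{n ≥ 1} C(γ, n, 0) = ℤ^d. Then there exists a translation-equivariant matching rule Φ such that for ℙ-a.e. γ: every site x is matched by Φ(γ, ·) to a site lying in C(γ, n, x) for some n, and for every n ≥ 1 and every n-clump L = C(γ, n, x), the number of sites of L whose partner under Φ(γ, ·) lies outside L equals |Σ_{x ∈ L} (2γ(x) − 1)|. -/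
open MeasureTheory ENNReal

noncomputable section

/-- Sites: the lattice `ℤ^d`. -/
abbrev Site (d : ℕ) := Fin d → ℤ

/-- Configurations: elements of `{0,1}^{ℤ^d}`, encoded with `Bool`. -/
abbrev Config (d : ℕ) := Site d → Bool

/-- The translation `θ^z` acting on configurations: `(θ^z γ)(x) = γ(x - z)`. -/
def shiftCfg {d : ℕ} (z : Site d) (γ : Config d) : Config d := fun x => γ (x - z)

/-- `φ` is a matching on `γ`: an involutive bijection matching ones to zeros. -/
def IsMatching {d : ℕ} (γ : Config d) (φ : Site d → Site d) : Prop :=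
  Function.Bijective φ ∧ (∀ x, φ (φ x) = x) ∧ ∀ x, γ (φ x) = !(γ x)

/-- `Φ` is a matching rule with respect to the measure `P`. -/
def IsMatchingRule {d : ℕ} (P : Measure (Config d)) (Φ : Config d → Site d → Site d) : Prop :=
  (∀ x : Site d, Measurable fun γ => Φ γ x) ∧ ∀ᵐ γ ∂P, IsMatching γ (Φ γ)

/-- `Φ` is translation-equivariant with respect to `P`. -/
def IsEquivariant {d : ℕ} (P : Measure (Config d)) (Φ : Config d → Site d → Site d) : Prop :=
  ∀ z x : Site d, ∀ᵐ γ ∂P, Φ (shiftCfg z γ) (x + z) = Φ γ x + z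

/-- `P` is the product measure with i.i.d. Bernoulli(1/2) coordinates, characterized by
its values on cylinder events. -/
def IsBernoulliHalfProduct {d : ℕ} (P : Measure (Config d)) : Prop :=
  IsProbabilityMeasure P ∧
    ∀ (s : Finset (Site d)) (f : Site d → Bool),
      P {γ | ∀ x ∈ s, γ x = f x} = (1 / 2 : ℝ≥0∞) ^ s.card

/-- `Z_Φ(γ) = ‖Φ(γ, 0)‖`, the `ℓ^∞` distance from the origin to its partner. -/
def ZΦ {d : ℕ} (Φ : Config d → Site d → Site d) (γ : Config d) : ℝ := ‖Φ γ 0‖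

/-- Embedding of the lattice in `ℝ^d`. -/
def toR {d : ℕ} (x : Site d) : Fin d → ℝ := fun i => (x i : ℝ)

/-- The first standard basis vector `e₁`. -/
def e1 (d : ℕ) : Site d := fun i => if (i : ℕ) = 0 then 1 else 0

/-- `x` is a `k`-seed for `γ`. -/
def IsSeed {d : ℕ} (γ : Config d) (k : ℕ) (x : Site d) : Prop :=
  γ x = true ∧ ∀ n : ℕ, 1 ≤ n → n ≤ k - 1 → γ (x + (n : ℤ) • e1 d) = false

/-- `r_k = (2^k k²)^{1/d} + 1/2`. -/
def rr (d k : ℕ) : ℝ := ((2 : ℝ) ^ k * (k : ℝ) ^ 2) ^ ((d : ℝ)⁻¹) + 1 / 2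

/-- The shift `s_k = ⌊100 r_k⌋ e₁`. -/
def ss (d k : ℕ) : Site d := ⌊(100 : ℝ) * rr d k⌋ • e1 d

/-- `W_k(γ)`: the union of all `k`-cutters. -/
def cutters {d : ℕ} (γ : Config d) (k : ℕ) : Set (Fin d → ℝ) :=
  ⋃ x ∈ {x : Site d | IsSeed γ k (x - ss d k)}, {y : Fin d → ℝ | ‖y - toR x‖ = rr d k}

/-- The `k`-blob containing the point `p ∈ ℝ^d`: the connected component of `p` in the
complement of all `j`-cutters with `j > k`. -/
def blob {d : ℕ} (γ : Config d) (k : ℕ) (p : Fin d → ℝ) : Set (Fin d → ℝ) :=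
  connectedComponentIn (⋃ j ∈ {j : ℕ | k < j}, cutters γ j)ᶜ p

/-- The `k`-clump of a site `x`: the lattice points of the `k`-blob containing `x`. -/
def clump {d : ℕ} (γ : Config d) (k : ℕ) (x : Site d) : Set (Site d) :=
  {y : Site d | toR y ∈ blob γ k (toR x)}

/-- The event `E_k`: the cube `S(-s_k, r_k - 1)` contains a `k`-seed. -/
def Ek (d k : ℕ) : Set (Config d) :=
  {γ | ∃ y : Site d, IsSeed γ k y ∧ ‖toR y + toR (ss d k)‖ ≤ rr d k - 1}

/-- A `k`-seed lying in the annulus `S(-s_k, r_k + s) \ S(-s_k, r_k - s)`. -/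
def SeedInAnnulus {d : ℕ} (γ : Config d) (k : ℕ) (s : ℝ) (y : Site d) : Prop :=
  IsSeed γ k y ∧ ‖toR y + toR (ss d k)‖ ≤ rr d k + s ∧ rr d k - s < ‖toR y + toR (ss d k)‖

/-- The event `U_k(s)`: `S(-s_k, r_k + s) \ S(-s_k, r_k - s)` contains a `k`-seed. -/
def Uk (d : ℕ) (k : ℕ) (s : ℝ) : Set (Config d) :=
  {γ | ∃ y : Site d, SeedInAnnulus γ k s y}

/-- The event `C_k(s) = ∪_{j ≥ k} U_j(s)`. -/
def Ck (d : ℕ) (k : ℕ) (s : ℝ) : Set (Config d) :=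
  {γ | ∃ j : ℕ, k ≤ j ∧ γ ∈ Uk d j s}

/-- `±1`-valued spin `2γ(x) - 1`. -/
def pm1 {d : ℕ} (γ : Config d) (y : Site d) : ℤ := if γ y then 1 else -1

/-- `Φ` matches maximally within clumps: a.s. every clump is finite and the number of
sites of each `k`-clump `L` matched outside `L` equals `|Σ_{x ∈ L} (2γ(x) - 1)|`. -/
def MatchesMaximally {d : ℕ} (P : Measure (Config d))
    (Φ : Config d → Site d → Site d) : Prop :=
  ∀ᵐ γ ∂P, ∀ k : ℕ, 1 ≤ k → ∀ x : Site d,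
    (clump γ k x).Finite ∧
      (({y ∈ clump γ k x | Φ γ y ∉ clump γ k x}.ncard : ℤ)
        = |∑ᶠ y ∈ clump γ k x, pm1 γ y|)



/-! ## Deterministic part -/

section ranks
variable {α : Type*} [LinearOrder α]

/-- The rank of `x` in `A`. -/
def rk (A : Finset α) (x : α) : ℕ := (A.filter (· < x)).card

lemma rank_lt_card (A : Finset α) {x : α} (hx : x ∈ A) :
    rk A x < A.card := by
  apply Finset.card_lt_card
  refine (Finset.filter_ssubset).2 ⟨x, hx, lt_irrefl x⟩

lemma rank_strict (A : Finset α) {x y : α} (hx : x ∈ A) (hxy : x < y) :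
    rk A x < rk A y := by
  apply Finset.card_lt_card
  rw [Finset.ssubset_iff_of_subset]
  · exact ⟨x, by simp [hx, hxy], by simp⟩
  · intro z hz
    simp only [Finset.mem_filter] at hz ⊢
    exact ⟨hz.1, hz.2.trans hxy⟩

lemma rank_inj (A : Finset α) {x y : α} (hx : x ∈ A) (hy : y ∈ A)
    (h : rk A x = rk A y) : x = y := by
  rcases lt_trichotomy x y with h' | h' | h'
  · have := rank_strict A hx h'; omega
  · exact h'
  · have := rank_strict A hy h'; omega

lemma rank_surj (A : Finset α) (i : ℕ) (hi : i < A.card) :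
    ∃ x ∈ A, rk A x = i := by
  have h : A.image (fun x => rk A x) = Finset.range A.card := by
    apply Finset.eq_of_subset_of_card_le
    · intro j hj
      simp only [Finset.mem_image] at hj
      obtain ⟨x, hx, rfl⟩ := hj
      exact Finset.mem_range.2 (rank_lt_card A hx)
    · rw [Finset.card_image_of_injOn, Finset.card_range]
      intro x hx y hy h
      exact rank_inj A hx hy h
  have := Finset.mem_range.2 hi
  rw [← h, Finset.mem_image] at this
  exact this

end ranks

/-- Unmatched sites of the cell of `x`, of the same colour as `x`, preceding `x`. -/
def rkSet {d : ℕ} (γ : Config d) (K : Site d → Set (Site d)) (W : Set (Site d)) (x : Site d) :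
    Set (Site d) :=
  {z | z ∈ K x ∧ z ∈ W ∧ γ z = γ x ∧ toLex z < toLex x}

/-- The pairs formed in one step. -/
def pairRel {d : ℕ} (γ : Config d) (K : Site d → Set (Site d)) (W : Set (Site d))
    (x y : Site d) : Prop :=
  x ∈ W ∧ y ∈ W ∧ γ x ≠ γ y ∧ y ∈ K x ∧ (rkSet γ K W x).ncard = (rkSet γ K W y).ncard

/-- Sites unmatched after `n` steps. -/
def Wst {d : ℕ} (C : Config d → ℕ → Site d → Set (Site d)) (γ : Config d) : ℕ → Set (Site d)
  | 0 => Set.univ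
  | n + 1 => {x | x ∈ Wst C γ n ∧ ¬ ∃ y, pairRel γ (C γ (n + 1)) (Wst C γ n) x y}

/-- The pairs formed at step `n + 1`. -/
def pairAt {d : ℕ} (C : Config d → ℕ → Site d → Set (Site d)) (γ : Config d) (n : ℕ)
    (x y : Site d) : Prop :=
  pairRel γ (C γ (n + 1)) (Wst C γ n) x y

/-- `x` and `y` are eventually matched. -/
def RR {d : ℕ} (C : Config d → ℕ → Site d → Set (Site d)) (γ : Config d)
    (x y : Site d) : Prop := ∃ n, pairAt C γ n x y

/-- The hypotheses on cells for a fixed configuration. -/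
structure GoodK {d : ℕ} (K : Site d → Set (Site d)) : Prop where
  refl : ∀ x, x ∈ K x
  eqv : ∀ x y, y ∈ K x → K y = K x

section det
variable {d : ℕ} {γ : Config d} {K : Site d → Set (Site d)} {W : Set (Site d)}

lemma pairRel_symm (hK : GoodK K) {x y : Site d} (h : pairRel γ K W x y) :
    pairRel γ K W y x := by
  obtain ⟨h1, h2, h3, h4, h5⟩ := h
  exact ⟨h2, h1, h3.symm, by rw [hK.eqv x y h4]; exact hK.refl x, h5.symm⟩

open Classical in
/-- The class of unmatched sites of colour `b` in `K x`. -/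
def cls (γ : Config d) (K : Site d → Set (Site d)) (W : Set (Site d)) (x : Site d)
    (hfin : (K x).Finite) (b : Bool) : Finset (Lex (Site d)) :=
  (hfin.toFinset.filter (fun z => z ∈ W ∧ γ z = b)).map toLex.toEmbedding

lemma mem_cls {x : Site d} {hfin : (K x).Finite} {b : Bool} {z : Site d} :
    toLex z ∈ cls γ K W x hfin b ↔ z ∈ K x ∧ z ∈ W ∧ γ z = b := by
  classical
  simp [cls]

lemma rkSet_ncard (hK : GoodK K) {x y : Site d} (hfin : (K x).Finite) (hy : y ∈ K x) :
    (rkSet γ K W y).ncard =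
      rk (cls γ K W x hfin (γ y)) (toLex y) := by
  rw [rk, ← Set.ncard_coe_finset, ← Set.ncard_image_of_injective _ (toLex (α := Site d)).injective]
  congr 1
  ext z
  obtain ⟨z, rfl⟩ := (toLex (α := Site d)).surjective z
  simp only [Set.mem_image, EmbeddingLike.apply_eq_iff_eq, exists_eq_right, Finset.coe_filter,
    Set.mem_ofPred_eq, mem_cls, rkSet, hK.eqv x y hy]
  constructor
  · rintro ⟨h1, h2, h3, h4⟩; exact ⟨⟨h1, h2, h3⟩, h4⟩
  · rintro ⟨⟨h1, h2, h3⟩, h4⟩; exact ⟨h1, h2, h3, h4⟩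

lemma pairRel_unique (hK : GoodK K) {x y y' : Site d} (hfin : (K x).Finite)
    (h : pairRel γ K W x y) (h' : pairRel γ K W x y') : y = y' := by
  classical
  obtain ⟨h1, h2, h3, h4, h5⟩ := h
  obtain ⟨k1, k2, k3, k4, k5⟩ := h'
  have hc : γ y = γ y' := by
    revert h3 k3; cases γ x <;> cases γ y <;> cases γ y' <;> simp
  rw [h5, rkSet_ncard hK hfin h4, rkSet_ncard hK hfin k4, ← hc] at k5
  have := rank_inj _ (mem_cls.2 ⟨h4, h2, rfl⟩) (mem_cls.2 ⟨k4, k2, hc.symm⟩) k5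
  exact toLex.injective this

lemma pairRel_exists (hK : GoodK K) {x y : Site d} (hfin : (K x).Finite) (hx : x ∈ W)
    (hy : y ∈ W) (hc : γ x ≠ γ y) (hxy : y ∈ K x) :
    (∃ z, pairRel γ K W x z) ∨ ∃ z, pairRel γ K W y z := by
  classical
  have hKy := hK.eqv x y hxy
  rcases le_total (cls γ K W x hfin (γ x)).card (cls γ K W x hfin (γ y)).card with h | h
  · left
    have h1 := rank_lt_card (cls γ K W x hfin (γ x)) (mem_cls.2 ⟨hK.refl x, hx, rfl⟩)
    obtain ⟨z, hz, hr⟩ := rank_surj _ _ (h1.trans_le h)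
    obtain ⟨z, rfl⟩ := (toLex (α := Site d)).surjective z
    rw [mem_cls] at hz
    refine ⟨z, hx, hz.2.1, by rw [hz.2.2]; exact hc, hz.1, ?_⟩
    rw [rkSet_ncard hK hfin (hK.refl x), rkSet_ncard hK hfin hz.1, hz.2.2, hr]
  · right
    have h1 := rank_lt_card (cls γ K W x hfin (γ y)) (mem_cls.2 ⟨hxy, hy, rfl⟩)
    obtain ⟨z, hz, hr⟩ := rank_surj _ _ (h1.trans_le h)
    obtain ⟨z, rfl⟩ := (toLex (α := Site d)).surjective z
    rw [mem_cls] at hz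
    refine ⟨z, hy, hz.2.1, by rw [hz.2.2]; exact hc.symm, by rw [hKy]; exact hz.1, ?_⟩
    rw [rkSet_ncard hK hfin hxy, rkSet_ncard hK hfin hz.1, hz.2.2, hr]

end det

section stages
variable {d : ℕ} {C : Config d → ℕ → Site d → Set (Site d)} {γ : Config d}

lemma Wst_anti {m n : ℕ} (h : m ≤ n) : Wst C γ n ⊆ Wst C γ m := by
  induction h with
  | refl => exact subset_rfl
  | step _ ih => exact fun x hx => ih hx.1

lemma RR_symm (hK : ∀ n, GoodK (C γ (n + 1))) {x y : Site d} (h : RR C γ x y) : RR C γ y x := by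
  obtain ⟨n, h⟩ := h
  exact ⟨n, pairRel_symm (hK n) h⟩

lemma pairAt_not_mem {n m : ℕ} {x y : Site d} (h : pairAt C γ n x y) (hnm : n < m) :
    x ∉ Wst C γ m := by
  intro hx
  have : x ∈ Wst C γ (n + 1) := Wst_anti hnm hx
  exact this.2 ⟨y, h⟩

lemma pairAt_stage {n m : ℕ} {x y y' : Site d} (h : pairAt C γ n x y) (h' : pairAt C γ m x y') :
    n = m := by
  rcases lt_trichotomy n m with hl | hl | hl
  · exact absurd h'.1 (pairAt_not_mem h hl)
  · exact hl
  · exact absurd h.1 (pairAt_not_mem h' hl)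

lemma RR_unique (hK : ∀ n, GoodK (C γ (n + 1))) (hfin : ∀ n x, (C γ (n + 1) x).Finite)
    {x y y' : Site d} (h : RR C γ x y) (h' : RR C γ x y') : y = y' := by
  obtain ⟨n, h⟩ := h
  obtain ⟨m, h'⟩ := h'
  obtain rfl := pairAt_stage h h'
  exact pairRel_unique (hK n) (hfin n x) h h'

lemma Wst_colour (hK : ∀ n, GoodK (C γ (n + 1))) (hfin : ∀ n x, (C γ (n + 1) x).Finite)
    {n : ℕ} {x y : Site d} (hx : x ∈ Wst C γ (n + 1)) (hy : y ∈ Wst C γ (n + 1))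
    (hxy : y ∈ C γ (n + 1) x) : γ x = γ y := by
  by_contra hc
  rcases pairRel_exists (hK n) (hfin n x) hx.1 hy.1 hc hxy with h | h
  · exact hx.2 h
  · exact hy.2 h

lemma matched_of_not_mem {n : ℕ} {x : Site d} (h : x ∉ Wst C γ n) :
    ∃ m < n, ∃ y, pairAt C γ m x y := by
  induction n with
  | zero => exact absurd (Set.mem_univ x) h
  | succ n ih =>
    by_cases hx : x ∈ Wst C γ n
    · by_contra hc
      push Not at hc
      exact h ⟨hx, fun ⟨y, hy⟩ => hc n (Nat.lt_succ_self n) y hy⟩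
    · obtain ⟨m, hm, hy⟩ := ih hx
      exact ⟨m, by omega, hy⟩

lemma RR_iff {x : Site d} : (∃ y, RR C γ x y) ↔ ∃ n, x ∉ Wst C γ n := by
  constructor
  · rintro ⟨y, n, h⟩
    exact ⟨n + 1, pairAt_not_mem h (Nat.lt_succ_self n)⟩
  · rintro ⟨n, h⟩
    obtain ⟨m, _, y, hy⟩ := matched_of_not_mem h
    exact ⟨y, m, hy⟩

/-- Maximality count for a clump. -/
lemma count_clump (hK : ∀ n, GoodK (C γ (n + 1))) (hfin : ∀ n x, (C γ (n + 1) x).Finite)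
    (hmono : ∀ m n x, m ≤ n → C γ (m + 1) x ⊆ C γ (n + 1) x)
    (φ : Site d → Site d) (hφ : ∀ x, RR C γ x (φ x)) (n : ℕ) (x : Site d) :
    (({y ∈ C γ (n + 1) x | φ y ∉ C γ (n + 1) x}.ncard : ℤ)
              = |∑ᶠ y ∈ C γ (n + 1) x, pm1 γ y|) := by
  classical
  have hφφ : ∀ x, φ (φ x) = x := fun x => RR_unique hK hfin (hφ _) (RR_symm hK (hφ x))
  have hmem : ∀ y ∈ C γ (n + 1) x, (φ y ∈ C γ (n + 1) x ↔ y ∉ Wst C γ (n + 1)) := by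
    intro y hy
    have hKy := (hK n).eqv x y hy
    constructor
    · intro h hyW
      obtain ⟨m, hm⟩ := hφ y
      have hmn : n + 1 ≤ m := by
        by_contra hlt
        exact pairAt_not_mem hm (by omega) hyW
      have := Wst_colour hK hfin hyW (Wst_anti hmn hm.2.1) (by rw [hKy]; exact h)
      exact hm.2.2.1 this
    · intro h
      obtain ⟨m, hm, y', hy'⟩ := matched_of_not_mem h
      have : φ y = y' := RR_unique hK hfin (hφ y) ⟨m, hy'⟩
      rw [this, ← hKy]
      exact hmono m n y (by omega) hy'.2.2.2.1
  set F := (hfin n x).toFinset with hF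
  have hFm : ∀ y, y ∈ F ↔ y ∈ C γ (n + 1) x := by simp [hF]
  have hsum : ∑ᶠ y ∈ C γ (n + 1) x, pm1 γ y = ∑ y ∈ F, pm1 γ y := by
    rw [← finsum_mem_coe_finset]; simp [hF]
  have hset : {y ∈ C γ (n + 1) x | φ y ∉ C γ (n + 1) x} =
      ((F.filter (fun y => y ∈ Wst C γ (n + 1)) : Finset (Site d)) : Set (Site d)) := by
    ext y
    simp only [Set.mem_ofPred_eq, Finset.coe_filter, hFm]
    constructor
    · rintro ⟨h1, h2⟩; exact ⟨h1, by rw [hmem y h1] at h2; tauto⟩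
    · rintro ⟨h1, h2⟩; exact ⟨h1, by rw [hmem y h1]; tauto⟩
  rw [hset, Set.ncard_coe_finset, hsum,
    ← Finset.sum_filter_add_sum_filter_not F (fun y => y ∈ Wst C γ (n + 1))]
  have hz : ∑ y ∈ F.filter (fun y => ¬ y ∈ Wst C γ (n + 1)), pm1 γ y = 0 := by
    refine Finset.sum_involution (fun y _ => φ y) ?_ ?_ ?_ ?_
    · intro y _
      obtain ⟨m, hm⟩ := hφ y
      have := hm.2.2.1
      unfold pm1
      revert this
      cases γ y <;> cases γ (φ y) <;> simp
    · intro y _ _ h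
      obtain ⟨m, hm⟩ := hφ y
      exact hm.2.2.1 (by rw [h])
    · intro y hy
      simp only [Finset.mem_filter, hFm] at hy ⊢
      have h1 := (hmem y hy.1).2 hy.2
      exact ⟨h1, (hmem _ h1).1 (by rw [hφφ]; exact hy.1)⟩
    · intro y _; exact hφφ y
  rw [hz, add_zero]
  set G := F.filter (fun y => y ∈ Wst C γ (n + 1)) with hG
  rcases G.eq_empty_or_nonempty with h | ⟨y0, hy0⟩
  · simp [h]
  · have : ∀ y ∈ G, pm1 γ y = pm1 γ y0 := by
      intro y hy
      simp only [hG, Finset.mem_filter, hFm] at hy hy0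
      have := Wst_colour hK hfin hy.2 hy0.2
        (by rw [(hK n).eqv x y hy.1]; exact hy0.1)
      unfold pm1; rw [this]
    rw [Finset.sum_congr rfl this, Finset.sum_const, nsmul_eq_mul, abs_mul]
    have : |pm1 γ y0| = 1 := by unfold pm1; split_ifs <;> simp
    rw [this]; simp

end stages

section equi
variable {d : ℕ}

lemma rkSet_shift {γ : Config d} {K K' : Site d → Set (Site d)} {W W' : Set (Site d)}
    (z : Site d) (hK : ∀ x y, y + z ∈ K' (x + z) ↔ y ∈ K x) (hW : ∀ x, x + z ∈ W' ↔ x ∈ W)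
    (x : Site d) :
    (rkSet (shiftCfg z γ) K' W' (x + z)).ncard = (rkSet γ K W x).ncard := by
  rw [← Set.ncard_image_of_injective (rkSet γ K W x) (add_left_injective z)]
  congr 1
  ext y
  obtain ⟨y, rfl⟩ : ∃ y', y = y' + z := ⟨y - z, by simp⟩
  simp only [Set.mem_image, rkSet, Set.mem_ofPred_eq, hK, hW,
    shiftCfg, add_sub_cancel_right]
  have : toLex (y + z) < toLex (x + z) ↔ toLex y < toLex x := by
    rw [toLex_add, toLex_add]; exact add_lt_add_iff_right _
  rw [this]
  constructor
  · intro h; exact ⟨y, h, rfl⟩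
  · rintro ⟨y', h, h'⟩
    obtain rfl := add_right_cancel h'
    exact h

lemma pairRel_shift {γ : Config d} {K K' : Site d → Set (Site d)} {W W' : Set (Site d)}
    (z : Site d) (hK : ∀ x y, y + z ∈ K' (x + z) ↔ y ∈ K x) (hW : ∀ x, x + z ∈ W' ↔ x ∈ W)
    (x y : Site d) :
    pairRel (shiftCfg z γ) K' W' (x + z) (y + z) ↔ pairRel γ K W x y := by
  unfold pairRel
  rw [rkSet_shift z hK hW, rkSet_shift z hK hW, hK, hW, hW]
  simp [shiftCfg]

variable {C : Config d → ℕ → Site d → Set (Site d)}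

lemma Wst_shift
    (hC : ∀ γ n x y z, y + z ∈ C (shiftCfg z γ) (n + 1) (x + z) ↔ y ∈ C γ (n + 1) x)
    (γ : Config d) (z : Site d) (n : ℕ) :
    ∀ x, x + z ∈ Wst C (shiftCfg z γ) n ↔ x ∈ Wst C γ n := by
  induction n with
  | zero => intro x; simp [Wst]
  | succ n ih =>
    intro x
    simp only [Wst, Set.mem_ofPred_eq, ih]
    have : (∃ y, pairRel (shiftCfg z γ) (C (shiftCfg z γ) (n + 1)) (Wst C (shiftCfg z γ) n)
        (x + z) y) ↔ ∃ y, pairRel γ (C γ (n + 1)) (Wst C γ n) x y := by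
      rw [(Equiv.addRight z).surjective.exists]
      simp only [Equiv.coe_addRight]
      exact exists_congr fun y => pairRel_shift z (fun x y => hC γ n x y z) ih x y
    rw [this]

lemma RR_shift
    (hC : ∀ γ n x y z, y + z ∈ C (shiftCfg z γ) (n + 1) (x + z) ↔ y ∈ C γ (n + 1) x)
    (γ : Config d) (z x y : Site d) :
    RR C (shiftCfg z γ) (x + z) (y + z) ↔ RR C γ x y :=
  exists_congr fun n => pairRel_shift z (fun x y => hC γ n x y z) (Wst_shift hC γ z n) x y

end equi

/-! ## Measurability -/

section meas
variable {Ω : Type*} [MeasurableSpace Ω] {ι : Type*} [Countable ι]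

lemma measurableSet_eq_finset (A : Ω → Set ι) (hA : ∀ y, MeasurableSet {ω | y ∈ A ω})
    (F : Finset ι) : MeasurableSet {ω | A ω = (F : Set ι)} := by
  have : {ω | A ω = (F : Set ι)} = ⋂ y, {ω | y ∈ A ω ↔ y ∈ F} := by
    ext ω; simp [Set.ext_iff]
  rw [this]
  refine MeasurableSet.iInter fun y => ?_
  by_cases hy : y ∈ F
  · simpa [hy] using hA y
  · simp only [hy, iff_false]
    exact (hA y).compl

lemma measurable_ncard_of_mem (A : Ω → Set ι) (hA : ∀ y, MeasurableSet {ω | y ∈ A ω}) :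
    Measurable fun ω => (A ω).ncard := by
  refine measurable_to_countable' fun k => ?_
  have hU : ∀ k, MeasurableSet (⋃ F ∈ {F : Finset ι | F.card = k}, {ω | A ω = (F : Set ι)}) :=
    fun k => MeasurableSet.biUnion (Set.to_countable _) fun F _ => measurableSet_eq_finset A hA F
  have hV : MeasurableSet (⋃ F : Finset ι, {ω | A ω = (F : Set ι)}) :=
    MeasurableSet.iUnion fun F => measurableSet_eq_finset A hA F
  by_cases hk : k = 0
  · have : (fun ω => (A ω).ncard) ⁻¹' {k} =
        (⋃ F ∈ {F : Finset ι | F.card = k}, {ω | A ω = (F : Set ι)}) ∪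
        (⋃ F : Finset ι, {ω | A ω = (F : Set ι)})ᶜ := by
      ext ω
      simp only [Set.mem_preimage, Set.mem_singleton_iff, Set.mem_union, Set.mem_iUnion,
        Set.mem_ofPred_eq, Set.mem_compl_iff, exists_prop]
      constructor
      · intro h
        by_cases hf : (A ω).Finite
        · left
          exact ⟨hf.toFinset, by rw [← Set.ncard_eq_toFinset_card _ hf, h], by simp⟩
        · right
          rintro ⟨F, hF⟩
          exact hf (hF ▸ F.finite_toSet)
      · rintro (⟨F, hF, h⟩ | h)
        · rw [h, Set.ncard_coe_finset, hF]
        · rw [hk, Set.Infinite.ncard]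
          intro hf
          exact h ⟨hf.toFinset, by simp⟩
    rw [this]
    exact (hU k).union hV.compl
  · have : (fun ω => (A ω).ncard) ⁻¹' {k} =
        (⋃ F ∈ {F : Finset ι | F.card = k}, {ω | A ω = (F : Set ι)}) := by
      ext ω
      simp only [Set.mem_preimage, Set.mem_singleton_iff, Set.mem_iUnion,
        Set.mem_ofPred_eq, exists_prop]
      constructor
      · intro h
        have hf : (A ω).Finite := Set.finite_of_ncard_ne_zero (by rw [h]; exact hk)
        exact ⟨hf.toFinset, by rw [← Set.ncard_eq_toFinset_card _ hf, h], by simp⟩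
      · rintro ⟨F, hF, h⟩
        rw [h, Set.ncard_coe_finset, hF]
    rw [this]
    exact hU k

end meas

section meas2
variable {d : ℕ} {C : Config d → ℕ → Site d → Set (Site d)}

lemma measurableSet_colour_eq (x y : Site d) : MeasurableSet {γ : Config d | γ x = γ y} :=
  measurableSet_eq_fun (measurable_pi_apply x) (measurable_pi_apply y)

lemma measurableSet_colour (x : Site d) (b : Bool) : MeasurableSet {γ : Config d | γ x = b} :=
  measurableSet_eq_fun (measurable_pi_apply x) measurable_const

lemma meas_pairRel (K : Config d → Site d → Set (Site d)) (W : Config d → Set (Site d))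
    (hK : ∀ x y, MeasurableSet {γ | y ∈ K γ x}) (hW : ∀ x, MeasurableSet {γ | x ∈ W γ})
    (x y : Site d) : MeasurableSet {γ | pairRel γ (K γ) (W γ) x y} := by
  have hr : ∀ x, Measurable fun γ => (rkSet γ (K γ) (W γ) x).ncard := by
    intro x
    refine measurable_ncard_of_mem _ fun z => ?_
    have : {γ : Config d | z ∈ rkSet γ (K γ) (W γ) x} =
        {γ | z ∈ K γ x} ∩ ({γ | z ∈ W γ} ∩ ({γ | γ z = γ x} ∩
          {_γ : Config d | toLex z < toLex x})) := rfl
    rw [this]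
    exact (hK x z).inter ((hW z).inter ((measurableSet_colour_eq z x).inter (MeasurableSet.const _)))
  have : {γ : Config d | pairRel γ (K γ) (W γ) x y} =
      {γ | x ∈ W γ} ∩ ({γ | y ∈ W γ} ∩ ({γ | γ x = γ y}ᶜ ∩ ({γ | y ∈ K γ x} ∩
        {γ | (rkSet γ (K γ) (W γ) x).ncard = (rkSet γ (K γ) (W γ) y).ncard}))) := rfl
  rw [this]
  exact (hW x).inter ((hW y).inter ((measurableSet_colour_eq x y).compl.inter ((hK x y).inter
    (measurableSet_eq_fun (hr x) (hr y)))))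

lemma meas_Wst (hmeas : ∀ (n : ℕ) (x y : Site d), MeasurableSet {γ | y ∈ C γ n x}) (n : ℕ) :
    ∀ x, MeasurableSet {γ | x ∈ Wst C γ n} := by
  induction n with
  | zero => intro x; simp [Wst]
  | succ n ih =>
    intro x
    have : {γ | x ∈ Wst C γ (n + 1)} = {γ | x ∈ Wst C γ n} ∩
        (⋃ y, {γ | pairRel γ (C γ (n + 1)) (Wst C γ n) x y})ᶜ := by
      ext γ; simp [Wst]
    rw [this]
    exact (ih x).inter (MeasurableSet.iUnion fun y => meas_pairRel _ _ (hmeas (n + 1)) ih x y).compl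

lemma meas_RR (hmeas : ∀ (n : ℕ) (x y : Site d), MeasurableSet {γ | y ∈ C γ n x})
    (x y : Site d) : MeasurableSet {γ | RR C γ x y} := by
  have : {γ | RR C γ x y} = ⋃ n, {γ | pairRel γ (C γ (n + 1)) (Wst C γ n) x y} := by
    ext γ; simp [RR, pairAt]
  rw [this]
  exact MeasurableSet.iUnion fun n => meas_pairRel _ _ (hmeas (n + 1)) (meas_Wst hmeas n) x y

/-- `y` is the unique partner of `x`. -/
def UR (C : Config d → ℕ → Site d → Set (Site d)) (γ : Config d) (x y : Site d) : Prop :=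
  RR C γ x y ∧ ∀ y', RR C γ x y' → y' = y

open Classical in
/-- The matching rule. -/
def Phi (C : Config d → ℕ → Site d → Set (Site d)) (γ : Config d) (x : Site d) : Site d :=
  if h : ∃ y, UR C γ x y then h.choose else x

lemma Phi_eq {γ : Config d} {x y : Site d} (h : UR C γ x y) : Phi C γ x = y := by
  have h' : ∃ y, UR C γ x y := ⟨y, h⟩
  rw [Phi, dif_pos h']
  exact h.2 _ h'.choose_spec.1

lemma Phi_eq_self {γ : Config d} {x : Site d} (h : ¬ ∃ y, UR C γ x y) : Phi C γ x = x := by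
  rw [Phi, dif_neg h]

lemma meas_UR (hmeas : ∀ (n : ℕ) (x y : Site d), MeasurableSet {γ | y ∈ C γ n x})
    (x y : Site d) : MeasurableSet {γ | UR C γ x y} := by
  have : {γ | UR C γ x y} = {γ | RR C γ x y} ∩ ⋂ y', ({γ | RR C γ x y'}ᶜ ∪ {_γ | y' = y}) := by
    ext γ; simp [UR, imp_iff_not_or]
  rw [this]
  exact (meas_RR hmeas x y).inter (MeasurableSet.iInter fun y' =>
    (meas_RR hmeas x y').compl.union (MeasurableSet.const _))

lemma meas_Phi (hmeas : ∀ (n : ℕ) (x y : Site d), MeasurableSet {γ | y ∈ C γ n x})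
    (x : Site d) : Measurable fun γ => Phi C γ x := by
  refine measurable_to_countable' fun y => ?_
  have : (fun γ => Phi C γ x) ⁻¹' {y} =
      {γ | UR C γ x y} ∪ ((⋃ y', {γ | UR C γ x y'})ᶜ ∩ {_γ | x = y}) := by
    ext γ
    simp only [Set.mem_preimage, Set.mem_singleton_iff, Set.mem_union, Set.mem_ofPred_eq,
      Set.mem_inter_iff, Set.mem_compl_iff, Set.mem_iUnion]
    by_cases h : ∃ y', UR C γ x y'
    · obtain ⟨y', hy'⟩ := h
      rw [Phi_eq hy']
      constructor
      · rintro rfl; exact Or.inl hy'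
      · rintro (h | h)
        · exact h.2 _ hy'.1
        · exact absurd ⟨y', hy'⟩ h.1
    · rw [Phi_eq_self h]
      constructor
      · intro h'; exact Or.inr ⟨h, h'⟩
      · rintro (h' | h')
        · exact absurd ⟨y, h'⟩ h
        · exact h'.2
  rw [this]
  exact (meas_UR hmeas x y).union ((MeasurableSet.iUnion fun y' => meas_UR hmeas x y').compl.inter
    (MeasurableSet.const _))

lemma UR_shift
    (hC : ∀ γ n x y z, y + z ∈ C (shiftCfg z γ) (n + 1) (x + z) ↔ y ∈ C γ (n + 1) x)
    (γ : Config d) (z x y : Site d) :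
    UR C (shiftCfg z γ) (x + z) (y + z) ↔ UR C γ x y := by
  unfold UR
  rw [RR_shift hC, (Equiv.addRight z).surjective.forall]
  simp only [Equiv.coe_addRight, RR_shift hC]
  refine and_congr_right fun _ => forall_congr' fun y' => imp_congr_right fun _ => ?_
  exact ⟨fun h => add_right_cancel h, fun h => by rw [h]⟩

lemma Phi_shift
    (hC : ∀ γ n x y z, y + z ∈ C (shiftCfg z γ) (n + 1) (x + z) ↔ y ∈ C γ (n + 1) x)
    (γ : Config d) (z x : Site d) :
    Phi C (shiftCfg z γ) (x + z) = Phi C γ x + z := by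
  by_cases h : ∃ y, UR C γ x y
  · obtain ⟨y, hy⟩ := h
    rw [Phi_eq hy, Phi_eq ((UR_shift hC γ z x y).2 hy)]
  · rw [Phi_eq_self h, Phi_eq_self]
    rintro ⟨y, hy⟩
    refine h ⟨y - z, (UR_shift hC γ z x _).1 (by simpa using hy)⟩

end meas2

/-! ## The product measure -/

section prob
variable {d : ℕ} {P : Measure (Config d)}

/-- Cylinder events. -/
def cyl (s : Finset (Site d)) (f : Config d) : Set (Config d) := {γ | ∀ x ∈ s, γ x = f x}

lemma meas_cyl (s : Finset (Site d)) (f : Config d) : MeasurableSet (cyl s f) := by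
  have : cyl s f = ⋂ x ∈ s, {γ : Config d | γ x = f x} := by ext; simp [cyl]
  rw [this]
  exact Finset.measurableSet_biInter _ fun x _ => measurableSet_colour x (f x)

lemma bernoulli_unique {P Q : Measure (Config d)} (hP : IsBernoulliHalfProduct P)
    (hQ : IsBernoulliHalfProduct Q) : P = Q := by
  classical
  have := hP.1
  have := hQ.1
  refine ext_of_generate_finite (Set.range fun p : Finset (Site d) × Config d => cyl p.1 p.2)
    ?_ ?_ ?_ (by simp)
  · apply le_antisymm
    · refine iSup_le fun x => ?_
      rintro s ⟨t, _, rfl⟩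
      have : (fun γ : Config d => γ x) ⁻¹' t =
          ⋃ b ∈ t, cyl {x} (fun _ => b) := by
        ext γ; simp [cyl]
      rw [this]
      refine MeasurableSet.biUnion (Set.to_countable _) fun b _ => ?_
      exact MeasurableSpace.measurableSet_generateFrom ⟨({x}, fun _ => b), rfl⟩
    · apply MeasurableSpace.generateFrom_le
      rintro _ ⟨p, rfl⟩
      exact meas_cyl p.1 p.2
  · rintro _ ⟨⟨s, f⟩, rfl⟩ _ ⟨⟨t, g⟩, rfl⟩ ⟨γ, h1, h2⟩
    refine ⟨(s ∪ t, γ), ?_⟩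
    ext η
    simp only [cyl, Set.mem_ofPred_eq, Set.mem_inter_iff, Finset.mem_union] at h1 h2 ⊢
    constructor
    · intro h
      exact ⟨fun x hx => (h x (Or.inl hx)).trans (h1 x hx),
        fun x hx => (h x (Or.inr hx)).trans (h2 x hx)⟩
    · rintro ⟨h3, h4⟩ x (hx | hx)
      · rw [h3 x hx, h1 x hx]
      · rw [h4 x hx, h2 x hx]
  · rintro _ ⟨p, rfl⟩
    exact (hP.2 p.1 p.2).trans (hQ.2 p.1 p.2).symm

lemma measurable_shift (z : Site d) : Measurable (shiftCfg z) :=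
  measurable_pi_lambda _ fun x => measurable_pi_apply (x - z)

lemma shift_preserving (hP : IsBernoulliHalfProduct P) (z : Site d) :
    MeasurePreserving (shiftCfg z) P P := by
  classical
  refine ⟨measurable_shift z, bernoulli_unique ⟨?_, ?_⟩ hP⟩
  · have := hP.1
    exact Measure.isProbabilityMeasure_map (measurable_shift z).aemeasurable
  · intro s f
    change (Measure.map (shiftCfg z) P) (cyl s f) = _
    rw [Measure.map_apply (measurable_shift z) (meas_cyl s f)]
    have := hP.2 (s.image (· - z)) (fun x => f (x + z))
    rw [Finset.card_image_of_injective _ (sub_left_injective (b := z))] at this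
    rw [← this]
    congr 1
    ext γ
    simp [shiftCfg, cyl]

/-- Spin as a real number. -/
def spin (γ : Config d) (x : Site d) : ℝ := if γ x then 1 else -1

lemma measurable_spin (x : Site d) : Measurable fun γ : Config d => spin γ x :=
  Measurable.ite (measurableSet_colour x true) measurable_const measurable_const

lemma abs_spin (γ : Config d) (x : Site d) : |spin γ x| = 1 := by
  unfold spin; split_ifs <;> simp

lemma integrable_spin [IsFiniteMeasure P] (x : Site d) : Integrable (fun γ => spin γ x) P :=
  Integrable.of_bound (measurable_spin x).aestronglyMeasurable 1
    (Filter.Eventually.of_forall fun γ => by simp [abs_spin])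

lemma integrable_spin_mul [IsFiniteMeasure P] (x y : Site d) :
    Integrable (fun γ => spin γ x * spin γ y) P :=
  Integrable.of_bound ((measurable_spin x).mul (measurable_spin y)).aestronglyMeasurable 1
    (Filter.Eventually.of_forall fun γ => by simp [abs_mul, abs_spin])

lemma real_pair (hP : IsBernoulliHalfProduct P) {x y : Site d} (hxy : x ≠ y) (b : Bool) :
    P.real {γ | γ x = b ∧ γ y = b} = 1 / 4 := by
  classical
  have := hP.2 {x, y} (fun _ => b)
  rw [Finset.card_pair hxy] at this
  simp only [Finset.mem_insert, Finset.mem_singleton, forall_eq_or_imp, forall_eq] at this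
  rw [measureReal_def, this]
  simp
  norm_num

lemma integral_spin_mul (hP : IsBernoulliHalfProduct P) {x y : Site d} (hxy : x ≠ y) :
    ∫ γ, spin γ x * spin γ y ∂P = 0 := by
  have := hP.1
  have m : ∀ b, MeasurableSet {γ : Config d | γ x = b ∧ γ y = b} := fun b =>
    (measurableSet_colour x b).inter (measurableSet_colour y b)
  have h : (fun γ : Config d => spin γ x * spin γ y) = fun γ =>
      2 * ({γ : Config d | γ x = true ∧ γ y = true}.indicator 1 γ) +
      2 * ({γ : Config d | γ x = false ∧ γ y = false}.indicator 1 γ) - 1 := by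
    funext γ
    cases hx : γ x <;> cases hy : γ y <;> simp [spin, Set.indicator_apply, hx, hy] <;> norm_num
  have i : ∀ b, Integrable ({γ : Config d | γ x = b ∧ γ y = b}.indicator (1 : Config d → ℝ)) P :=
    fun b => (integrable_const (1 : ℝ)).indicator (m b)
  have iab : Integrable (fun γ => 2 * ({γ : Config d | γ x = true ∧ γ y = true}.indicator
      (1 : Config d → ℝ) γ) + 2 * ({γ : Config d | γ x = false ∧ γ y = false}.indicator
      (1 : Config d → ℝ) γ)) P := ((i true).const_mul 2).add ((i false).const_mul 2)
  rw [h, integral_sub iab (integrable_const _),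
    integral_add ((i true).const_mul 2) ((i false).const_mul 2), integral_const_mul,
    integral_const_mul, integral_indicator_one (m _), integral_indicator_one (m _),
    real_pair hP hxy, real_pair hP hxy]
  simp
  norm_num

lemma integral_spin_sq (hP : IsBernoulliHalfProduct P) (x : Site d) :
    ∫ γ, spin γ x * spin γ x ∂P = 1 := by
  have := hP.1
  have : (fun γ : Config d => spin γ x * spin γ x) = fun _ => 1 := by
    funext γ; unfold spin; split_ifs <;> norm_num
  rw [this]; simp

/-- Orthogonality: an event whose correlation with every spin is the same is uncorrelated. -/
lemma corr_zero (hd : 1 ≤ d) (hP : IsBernoulliHalfProduct P) (A : Set (Config d))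
    (hA : MeasurableSet A) (c : ℝ) (hc : ∀ x, ∫ γ in A, spin γ x ∂P = c) : c = 0 := by
  classical
  have := hP.1
  have : Nonempty (Fin d) := ⟨⟨0, hd⟩⟩
  have key : ∀ N : ℕ, (N : ℝ) * c ^ 2 ≤ 1 := by
    intro N
    obtain ⟨S, hS⟩ := Infinite.exists_subset_card_eq (Site d) N
    set I : Config d → ℝ := A.indicator 1 with hI
    have iI : Integrable I P := (integrable_const (1 : ℝ)).indicator hA
    have hIs : ∀ x, (fun γ => I γ * spin γ x) = A.indicator (fun γ => spin γ x) := by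
      intro x; funext γ; by_cases h : γ ∈ A <;> simp [hI, h]
    have iIs : ∀ x, Integrable (fun γ => I γ * spin γ x) P := by
      intro x; rw [hIs]; exact (integrable_spin x).indicator hA
    have eIs : ∀ x, ∫ γ, I γ * spin γ x ∂P = c := by
      intro x; rw [hIs, integral_indicator hA, hc]
    have hpos : 0 ≤ ∫ γ, ((N * c) * I γ - ∑ x ∈ S, spin γ x) ^ 2 ∂P :=
      integral_nonneg fun γ => sq_nonneg _
    have hexp : (fun γ => ((N * c) * I γ - ∑ x ∈ S, spin γ x) ^ 2) = fun γ =>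
        (N * c) ^ 2 * I γ - 2 * (N * c) * (∑ x ∈ S, I γ * spin γ x)
          + ∑ x ∈ S, ∑ y ∈ S, spin γ x * spin γ y := by
      funext γ
      have h1 : I γ ^ 2 = I γ := by by_cases h : γ ∈ A <;> simp [hI, h]
      rw [← Finset.mul_sum, ← Finset.sum_mul_sum]
      linear_combination (N * c) ^ 2 * h1
    have i2 : Integrable (fun γ => ∑ x ∈ S, I γ * spin γ x) P :=
      integrable_finsetSum _ fun x _ => iIs x
    have i3 : Integrable (fun γ => ∑ x ∈ S, ∑ y ∈ S, spin γ x * spin γ y) P :=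
      integrable_finsetSum _ fun x _ => integrable_finsetSum _ fun y _ => integrable_spin_mul x y
    have e2 : ∫ γ, ∑ x ∈ S, I γ * spin γ x ∂P = N * c := by
      rw [integral_finsetSum _ fun x _ => iIs x]
      simp [eIs, hS]
    have e3 : ∫ γ, ∑ x ∈ S, ∑ y ∈ S, spin γ x * spin γ y ∂P = N := by
      rw [integral_finsetSum _ fun x _ =>
        integrable_finsetSum _ fun y _ => integrable_spin_mul x y]
      have : ∀ x ∈ S, ∫ γ, ∑ y ∈ S, spin γ x * spin γ y ∂P = 1 := by
        intro x hx
        rw [integral_finsetSum _ fun y _ => integrable_spin_mul x y,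
          Finset.sum_eq_single_of_mem x hx fun y _ hy => integral_spin_mul hP hy.symm,
          integral_spin_sq hP]
      rw [Finset.sum_congr rfl this]; simp [hS]
    have e1 : ∫ γ, I γ ∂P ≤ 1 := by
      rw [hI, integral_indicator_one hA]; exact measureReal_le_one
    have i12 : Integrable (fun γ => (N * c) ^ 2 * I γ - 2 * (N * c) * (∑ x ∈ S, I γ * spin γ x)) P :=
      (iI.const_mul _).sub (i2.const_mul _)
    rw [hexp, integral_add i12 i3,
      integral_sub (iI.const_mul _) (i2.const_mul _), integral_const_mul, integral_const_mul,
      e2, e3] at hpos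
    rcases Nat.eq_zero_or_pos N with h0 | h0
    · simp [h0]
    · have hN : (0 : ℝ) < N := by exact_mod_cast h0
      have h2 : (N * c) ^ 2 * ∫ γ, I γ ∂P ≤ (N * c) ^ 2 := by
        nlinarith [sq_nonneg (N * c)]
      have h3 : (N : ℝ) * (N * c ^ 2) ≤ N * 1 := by nlinarith
      exact le_of_mul_le_mul_left h3 hN
  by_contra h
  have hc2 : 0 < c ^ 2 := by positivity
  obtain ⟨N, hN⟩ := exists_nat_gt (1 / c ^ 2)
  rw [div_lt_iff₀ hc2] at hN
  linarith [key N]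

lemma colour_balance (hd : 1 ≤ d) (hP : IsBernoulliHalfProduct P) (A : Set (Config d))
    (hA : MeasurableSet A) (hinv : ∀ z, shiftCfg z ⁻¹' A = A) :
    (P.restrict A) {γ | γ 0 = true} = (P.restrict A) {γ | γ 0 = false} := by
  have := hP.1
  have h0 := corr_zero hd hP A hA (∫ γ in A, spin γ 0 ∂P) (by
    intro x
    have hmp := (shift_preserving hP (-x)).restrict_preimage hA
    rw [hinv] at hmp
    have h1 := integral_map (μ := P.restrict A) (φ := shiftCfg (-x)) (measurable_shift (-x)).aemeasurable
      (f := fun γ => spin γ 0) (measurable_spin 0).aestronglyMeasurable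
    rw [hmp.map_eq] at h1
    rw [h1]
    simp [spin, shiftCfg])
  have h : (fun γ : Config d => spin γ 0) = fun γ =>
      ({γ : Config d | γ 0 = true}.indicator 1 γ) - ({γ : Config d | γ 0 = false}.indicator 1 γ) := by
    funext γ
    cases hx : γ 0 <;> simp [spin, Set.indicator_apply, hx]
  have i : ∀ b, Integrable ({γ : Config d | γ 0 = b}.indicator (1 : Config d → ℝ)) (P.restrict A) :=
    fun b => (integrable_const (1 : ℝ)).indicator (measurableSet_colour 0 b)
  rw [h, integral_sub (i _) (i _), integral_indicator_one (measurableSet_colour 0 _),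
    integral_indicator_one (measurableSet_colour 0 _), sub_eq_zero] at h0
  exact (measureReal_eq_measureReal_iff).1 h0

end prob

section final
variable {d : ℕ} {C : Config d → ℕ → Site d → Set (Site d)} {P : Measure (Config d)}

/-- Mass transport. -/
lemma mass_transport (Q : Measure (Config d)) (hQ : ∀ z, MeasurePreserving (shiftCfg z) Q Q)
    (hmeas : ∀ (n : ℕ) (x y : Site d), MeasurableSet {γ | y ∈ C γ n x})
    (hC : ∀ γ n x y z, y + z ∈ C (shiftCfg z γ) (n + 1) (x + z) ↔ y ∈ C γ (n + 1) x)
    (hK : ∀ γ n, GoodK (C γ (n + 1)))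
    (hfin : ∀ᵐ γ ∂Q, ∀ n x, (C γ (n + 1) x).Finite) (b : Bool) :
    Q ({γ | γ 0 = b} ∩ {γ | ∃ y, RR C γ 0 y}) = Q ({γ | γ 0 = !b} ∩ {γ | ∃ y, RR C γ 0 y}) := by
  have hE : ∀ b, Q ({γ | γ 0 = b} ∩ {γ | ∃ y, RR C γ 0 y}) =
      ∑' y, Q ({γ | γ 0 = b} ∩ {γ | RR C γ 0 y}) := by
    intro b
    rw [← measure_iUnion₀]
    · congr 1
      ext γ; simp
    · intro y y' hyy'
      refine measure_mono_null ?_ hfin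
      rintro γ ⟨⟨_, h1⟩, ⟨_, h2⟩⟩ h
      exact hyy' (RR_unique (hK γ) h h1 h2)
    · intro y
      exact ((measurableSet_colour 0 b).inter (meas_RR hmeas 0 y)).nullMeasurableSet
  rw [hE, hE, 
    ← (Equiv.neg (Site d)).tsum_eq (fun y => Q ({γ | γ 0 = !b} ∩ {γ | RR C γ 0 y}))]
  refine tsum_congr fun y => ?_
  simp only [Equiv.neg_apply]
  rw [← (hQ y).measure_preimage
    ((measurableSet_colour 0 b).inter (meas_RR hmeas 0 y)).nullMeasurableSet]
  congr 1
  ext γ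
  have h1 : RR C (shiftCfg y γ) 0 y ↔ RR C γ (-y) 0 := by
    have := RR_shift hC γ y (-y) 0
    simpa using this
  simp only [Set.preimage_inter, Set.mem_inter_iff, Set.mem_preimage, Set.mem_ofPred_eq, h1]
  have h2 : (shiftCfg y γ) 0 = γ (-y) := by simp [shiftCfg]
  rw [h2]
  constructor
  · rintro ⟨h3, h4⟩
    obtain ⟨n, hn⟩ := h4
    have := hn.2.2.1
    refine ⟨?_, RR_symm (hK γ) ⟨n, hn⟩⟩
    rw [h3] at this
    revert this
    cases b <;> cases γ 0 <;> simp
  · rintro ⟨h3, h4⟩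
    obtain ⟨n, hn⟩ := h4
    have := hn.2.2.1
    refine ⟨?_, RR_symm (hK γ) ⟨n, hn⟩⟩
    rw [h3] at this
    revert this
    cases b <;> cases γ (-y) <;> simp

lemma no_unmatched (hd : 1 ≤ d) (hP : IsBernoulliHalfProduct P)
    (hmeas : ∀ (n : ℕ) (x y : Site d), MeasurableSet {γ | y ∈ C γ n x})
    (hC : ∀ γ n x y z, y + z ∈ C (shiftCfg z γ) (n + 1) (x + z) ↔ y ∈ C γ (n + 1) x)
    (hK : ∀ γ n, GoodK (C γ (n + 1)))
    (hfin : ∀ᵐ γ ∂P, ∀ n x, (C γ (n + 1) x).Finite)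
    (hcol : ∀ᵐ γ ∂P, ∀ x y, (¬ ∃ z, RR C γ x z) → (¬ ∃ z, RR C γ y z) → γ x = γ y) (b : Bool) :
    P ({γ | γ 0 = b} \ {γ | ∃ y, RR C γ 0 y}) = 0 := by
  have := hP.1
  have hM : ∀ x, MeasurableSet {γ | ∃ y, RR C γ x y} := by
    intro x
    have : {γ | ∃ y, RR C γ x y} = ⋃ y, {γ | RR C γ x y} := by ext; simp
    rw [this]
    exact MeasurableSet.iUnion fun y => meas_RR hmeas x y
  set A : Set (Config d) := ⋃ x, ({γ | γ x = b} \ {γ | ∃ y, RR C γ x y}) with hAdef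
  have hA : MeasurableSet A :=
    MeasurableSet.iUnion fun x => (measurableSet_colour x b).diff (hM x)
  have hMs : ∀ γ x z, (∃ y, RR C (shiftCfg z γ) (x + z) y) ↔ ∃ y, RR C γ x y := by
    intro γ x z
    rw [(Equiv.addRight z).surjective.exists]
    simp only [Equiv.coe_addRight, RR_shift hC]
  have hinv : ∀ z, shiftCfg z ⁻¹' A = A := by
    intro z
    ext γ
    simp only [hAdef, Set.mem_preimage, Set.mem_iUnion, Set.mem_sdiff, Set.mem_ofPred_eq]
    rw [(Equiv.addRight z).surjective.exists]
    simp only [Equiv.coe_addRight, hMs]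
    simp [shiftCfg]
  have hQ : ∀ z, MeasurePreserving (shiftCfg z) (P.restrict A) (P.restrict A) := by
    intro z
    have := (shift_preserving hP z).restrict_preimage hA
    rwa [hinv] at this
  have hbal : (P.restrict A) {γ | γ 0 = b} = (P.restrict A) {γ | γ 0 = !b} := by
    have := colour_balance hd hP A hA hinv
    cases b
    · exact this.symm
    · exact this
  have hmt := mass_transport (P.restrict A) hQ hmeas hC hK (ae_restrict_of_ae hfin) b
  rw [← measure_inter_add_sdiff {γ : Config d | γ 0 = b} (hM 0),
    ← measure_inter_add_sdiff {γ : Config d | γ 0 = !b} (hM 0), hmt,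
    ENNReal.add_right_inj (measure_ne_top _ _)] at hbal
  have hz : (P.restrict A) ({γ | γ 0 = !b} \ {γ | ∃ y, RR C γ 0 y}) = 0 := by
    rw [Measure.restrict_apply' hA]
    refine measure_mono_null ?_ hcol
    rintro γ ⟨⟨h1, h2⟩, h3⟩ h
    obtain ⟨x, hx1, hx2⟩ := Set.mem_iUnion.1 h3
    have := h 0 x h2 hx2
    rw [Set.mem_ofPred_eq] at h1 hx1
    rw [h1, hx1] at this
    cases b <;> simp at this
  rw [hz, Measure.restrict_apply' hA, Set.inter_eq_left.2] at hbal
  · exact hbal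
  · exact Set.subset_iUnion (fun x => {γ : Config d | γ x = b} \ {γ | ∃ y, RR C γ x y}) 0

end final

/-- From a locally finite connected clumping rule one obtains a translation-equivariant
matching rule matching maximally within clumps. -/
theorem statement4 (d : ℕ) (hd : 1 ≤ d)
    (P : Measure (Config d)) (hP : IsBernoulliHalfProduct P)
    (C : Config d → ℕ → Site d → Set (Site d))
    (hmeas : ∀ (n : ℕ) (x y : Site d), MeasurableSet {γ | y ∈ C γ n x})
    (hprop : ∀ (γ : Config d) (n : ℕ), 1 ≤ n → ∀ x y z : Site d,
        x ∈ C γ n x ∧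
        ((C γ n x ∩ C γ n y).Nonempty → C γ n x = C γ n y) ∧
        C γ n x ⊆ C γ (n + 1) x ∧
        C (shiftCfg z γ) n (x + z) = (· + z) '' C γ n x)
    (hae : ∀ᵐ γ ∂P, (∀ (n : ℕ) (x : Site d), 1 ≤ n → (C γ n x).Finite) ∧
        ⋃ n ∈ {n : ℕ | 1 ≤ n}, C γ n 0 = Set.univ) :
    ∃ Φ : Config d → Site d → Site d,
      IsMatchingRule P Φ ∧ IsEquivariant P Φ ∧
        ∀ᵐ γ ∂P,
          (∀ x : Site d, ∃ n : ℕ, 1 ≤ n ∧ Φ γ x ∈ C γ n x) ∧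
          ∀ (n : ℕ), 1 ≤ n → ∀ x : Site d,
            (({y ∈ C γ n x | Φ γ y ∉ C γ n x}.ncard : ℤ)
              = |∑ᶠ y ∈ C γ n x, pm1 γ y|) := by
  have hC : ∀ γ n x y z, y + z ∈ C (shiftCfg z γ) (n + 1) (x + z) ↔ y ∈ C γ (n + 1) x := by
    intro γ n x y z
    rw [(hprop γ (n + 1) (by omega) x y z).2.2.2]
    constructor
    · rintro ⟨y', h, h'⟩
      obtain rfl := add_right_cancel h'
      exact h
    · intro h; exact ⟨y, h, rfl⟩
  have hK : ∀ γ n, GoodK (C γ (n + 1)) := fun γ n =>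
    ⟨fun x => (hprop γ (n + 1) (by omega) x x 0).1, fun x y h =>
      ((hprop γ (n + 1) (by omega) x y 0).2.1
        ⟨y, h, (hprop γ (n + 1) (by omega) y y 0).1⟩).symm⟩
  have hmono : ∀ γ m n x, m ≤ n → C γ (m + 1) x ⊆ C γ (n + 1) x := by
    intro γ m n x h
    induction h with
    | refl => exact subset_rfl
    | step _ ih => exact ih.trans (hprop γ _ (by omega) x x 0).2.2.1
  have hfin : ∀ᵐ γ ∂P, ∀ n x, (C γ (n + 1) x).Finite := by
    filter_upwards [hae] with γ h n x
    exact h.1 (n + 1) x (by omega)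
  have hcol : ∀ᵐ γ ∂P, ∀ x y, (¬ ∃ z, RR C γ x z) → (¬ ∃ z, RR C γ y z) → γ x = γ y := by
    filter_upwards [hae, hfin] with γ h hf x y hx hy
    have hmem : ∀ x, ∃ n, x ∈ C γ (n + 1) 0 := by
      intro x
      have hx : x ∈ ⋃ n : ℕ, ⋃ (_ : 1 ≤ n), C γ n 0 := by rw [h.2]; trivial
      simp only [Set.mem_iUnion, Set.mem_ofPred_eq, exists_prop] at hx
      obtain ⟨n, hn, hx⟩ := hx
      exact ⟨n - 1, by rwa [Nat.sub_add_cancel hn]⟩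
    obtain ⟨n, hn⟩ := hmem x
    obtain ⟨m, hm⟩ := hmem y
    have h1 := hmono γ n (max n m) 0 (le_max_left _ _) hn
    have h2 := hmono γ m (max n m) 0 (le_max_right _ _) hm
    rw [RR_iff] at hx hy
    push Not at hx hy
    exact Wst_colour (hK γ) hf (hx _) (hy _) (by rw [(hK γ _).eqv _ _ h1]; exact h2)
  have hall : ∀ᵐ γ ∂P, ∀ x, ∃ y, RR C γ x y := by
    rw [ae_all_iff]
    have h0 : ∀ᵐ γ ∂P, ∃ y, RR C γ 0 y := by
      have h1 := no_unmatched hd hP hmeas hC hK hfin hcol true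
      have h2 := no_unmatched hd hP hmeas hC hK hfin hcol false
      refine measure_mono_null ?_ (measure_union_null h1 h2)
      intro γ hγ
      cases hb : γ 0
      · exact Or.inr ⟨hb, hγ⟩
      · exact Or.inl ⟨hb, hγ⟩
    intro x
    have := (shift_preserving hP (-x)).quasiMeasurePreserving.ae h0
    filter_upwards [this] with γ hγ
    obtain ⟨y, hy⟩ := hγ
    refine ⟨y + x, ?_⟩
    rw [← RR_shift hC γ (-x)]
    simpa using hy
  have hΦ : ∀ᵐ γ ∂P, ∀ x, RR C γ x (Phi C γ x) := by
    filter_upwards [hall, hfin] with γ h hf x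
    obtain ⟨y, hy⟩ := h x
    rw [Phi_eq (y := y) ⟨hy, fun y' hy' => RR_unique (hK γ) hf hy' hy⟩]
    exact hy
  refine ⟨Phi C, ⟨fun x => meas_Phi hmeas x, ?_⟩, fun z x => Filter.Eventually.of_forall
    fun γ => Phi_shift hC γ z x, ?_⟩
  · filter_upwards [hΦ, hfin] with γ h hf
    have hinv : ∀ x, Phi C γ (Phi C γ x) = x := fun x =>
      RR_unique (hK γ) hf (h _) (RR_symm (hK γ) (h x))
    refine ⟨(Function.Involutive.bijective hinv), hinv, fun x => ?_⟩
    obtain ⟨n, hn⟩ := h x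
    have := hn.2.2.1
    revert this
    cases γ x <;> cases γ (Phi C γ x) <;> simp
  · filter_upwards [hΦ, hfin] with γ h hf
    refine ⟨fun x => ?_, fun n hn x => ?_⟩
    · obtain ⟨n, hn⟩ := h x
      exact ⟨n + 1, by omega, hn.2.2.2.1⟩
    · obtain ⟨n, rfl⟩ : ∃ m, n = m + 1 := ⟨n - 1, by omega⟩
      exact count_clump (hK γ) hf (hmono γ) (Phi C γ) h n x

end
end

section
/- Let Φ be a translation-equivariant matching rule that matches maximally within clumps. Then for every integer k ≥ 1, the probability that the origin is k-bad equals E[ (1/|L_k|) · |Σ_{x ∈ L_k} (2γ(x) − 1)| ] (the k-clump L_k of the origin is ℙ-a.s. finite and contains the origin, so the integrand is a.s. well defined). -/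
open MeasureTheory ENNReal

noncomputable section

/-! ### Shift invariance -/

lemma measurable_shiftCfg {d : ℕ} (z : Site d) : Measurable (shiftCfg z : Config d → Config d) := by
  unfold shiftCfg
  exact measurable_pi_lambda _ fun x => measurable_pi_apply _

lemma measurePreserving_shift {d : ℕ} {P : Measure (Config d)} (hP : IsBernoulliHalfProduct P)
    (z : Site d) : MeasurePreserving (shiftCfg z) P P := by
  have := hP.1
  refine ⟨measurable_shiftCfg z, ?_⟩
  symm
  refine ext_of_generate_finite
    {A : Set (Config d) | ∃ (s : Finset (Site d)) (f : Site d → Bool),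
      A = {γ | ∀ x ∈ s, γ x = f x}} ?_ ?_ ?_ ?_
  · apply le_antisymm
    · refine iSup_le fun x => ?_
      rw [← measurable_iff_comap_le]
      refine @measurable_to_bool _ (_) _ ?_
      apply MeasurableSpace.measurableSet_generateFrom
      refine ⟨{x}, fun _ => true, ?_⟩
      ext γ
      simp
    · apply MeasurableSpace.generateFrom_le
      rintro A ⟨s, f, rfl⟩
      have : {γ : Config d | ∀ x ∈ s, γ x = f x} = ⋂ x ∈ s, (fun γ => γ x) ⁻¹' {f x} := by
        ext γ; simp
      rw [this]
      exact Finset.measurableSet_biInter _ fun x _ =>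
        measurable_pi_apply x (MeasurableSet.singleton _)
  · rintro A ⟨s, f, rfl⟩ B ⟨t, g, rfl⟩ ⟨γ₀, h1, h2⟩
    classical
    refine ⟨s ∪ t, γ₀, ?_⟩
    ext γ
    simp only [Set.mem_inter_iff, Set.mem_ofPred_eq, Finset.mem_union] at *
    constructor
    · rintro ⟨h3, h4⟩ x (hx | hx)
      · rw [h3 x hx, h1 x hx]
      · rw [h4 x hx, h2 x hx]
    · intro h
      exact ⟨fun x hx => by rw [h x (Or.inl hx), h1 x hx],
        fun x hx => by rw [h x (Or.inr hx), h2 x hx]⟩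
  · rintro A ⟨s, f, rfl⟩
    classical
    have hm : MeasurableSet {γ : Config d | ∀ x ∈ s, γ x = f x} := by
      have : {γ : Config d | ∀ x ∈ s, γ x = f x} = ⋂ x ∈ s, (fun γ => γ x) ⁻¹' {f x} := by
        ext γ; simp
      rw [this]
      exact Finset.measurableSet_biInter _ fun x _ =>
        measurable_pi_apply x (MeasurableSet.singleton _)
    rw [Measure.map_apply (measurable_shiftCfg z) hm, hP.2]
    have : shiftCfg z ⁻¹' {γ : Config d | ∀ x ∈ s, γ x = f x}
        = {γ | ∀ x ∈ s.image (fun x => x - z), γ x = (fun x => f (x + z)) x} := by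
      ext γ
      simp [shiftCfg]
    rw [this, hP.2, Finset.card_image_of_injective _ sub_left_injective]
  · rw [Measure.map_apply (measurable_shiftCfg z) MeasurableSet.univ]; rfl

/-! ### Chains of balls -/

/-- A countable family of balls forming a basis. -/
def bb (d : ℕ) (b : ℕ × ℕ) : Set (Fin d → ℝ) :=
  Metric.ball (TopologicalSpace.denseSeq (Fin d → ℝ) b.1) (1 / ((b.2 : ℝ) + 1))

lemma exists_bb {d : ℕ} {U : Set (Fin d → ℝ)} (hU : IsOpen U) {p : Fin d → ℝ} (hp : p ∈ U) :
    ∃ b, p ∈ bb d b ∧ bb d b ⊆ U := by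
  obtain ⟨ε, hε, hb⟩ := Metric.isOpen_iff.1 hU p hp
  obtain ⟨n, hn⟩ := exists_nat_one_div_lt (half_pos hε)
  obtain ⟨i, hi⟩ := (TopologicalSpace.denseRange_denseSeq (Fin d → ℝ)).exists_dist_lt p
    (Nat.one_div_pos_of_nat (α := ℝ) (n := n))
  refine ⟨(i, n), hi, fun q hq => hb ?_⟩
  simp only [bb, Metric.mem_ball] at hq ⊢
  have := dist_triangle q (TopologicalSpace.denseSeq (Fin d → ℝ) i) p
  rw [dist_comm (TopologicalSpace.denseSeq (Fin d → ℝ) i) p] at this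
  linarith

/-- Balls reachable from `p` in `n` steps within `U`. -/
def reach {d : ℕ} (U : Set (Fin d → ℝ)) (p : Fin d → ℝ) : ℕ → ℕ × ℕ → Prop
  | 0, b => bb d b ⊆ U ∧ p ∈ bb d b
  | n + 1, b => bb d b ⊆ U ∧ ∃ b', (bb d b' ∩ bb d b).Nonempty ∧ reach U p n b'

lemma reach_subset {d : ℕ} {U : Set (Fin d → ℝ)} {p : Fin d → ℝ} (n : ℕ) :
    ∀ b, reach U p n b → bb d b ⊆ connectedComponentIn U p := by
  have hc : ∀ b, IsPreconnected (bb d b) := fun b => (convex_ball _ _).isPreconnected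
  induction n with
  | zero =>
    rintro b ⟨h1, h2⟩
    exact (hc b).subset_connectedComponentIn h2 h1
  | succ n ih =>
    rintro b ⟨h1, b', ⟨z, hz1, hz2⟩, hr⟩
    rw [connectedComponentIn_eq (ih b' hr hz1)]
    exact (hc b).subset_connectedComponentIn hz2 h1

lemma mem_cc_iff {d : ℕ} {U : Set (Fin d → ℝ)} (hU : IsOpen U) {p q : Fin d → ℝ} :
    q ∈ connectedComponentIn U p ↔ ∃ n b, reach U p n b ∧ q ∈ bb d b := by
  constructor
  · intro hq
    have hp : p ∈ U := connectedComponentIn_nonempty_iff.1 ⟨q, hq⟩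
    set V : Set (Fin d → ℝ) := ⋃ n, ⋃ b, ⋃ (_ : reach U p n b), bb d b with hV
    have hVo : IsOpen V := isOpen_iUnion fun n => isOpen_iUnion fun b => isOpen_iUnion fun _ =>
      Metric.isOpen_ball
    set V' : Set (Fin d → ℝ) := ⋃ b, ⋃ (_ : bb d b ⊆ U ∧ Disjoint (bb d b) V), bb d b with hV'
    have hV'o : IsOpen V' := isOpen_iUnion fun b => isOpen_iUnion fun _ => Metric.isOpen_ball
    have hdis : Disjoint V V' := by
      rw [hV']
      simp only [Set.disjoint_iUnion_right]
      exact fun b h => h.2.symm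
    have hpV : p ∈ V := by
      obtain ⟨b, hb, hbU⟩ := exists_bb hU hp
      simp only [hV, Set.mem_iUnion]
      exact ⟨0, b, ⟨hbU, hb⟩, hb⟩
    have hcov : connectedComponentIn U p ⊆ V ∪ V' := by
      intro z hz
      obtain ⟨b, hb, hbU⟩ := exists_bb hU (connectedComponentIn_subset _ _ hz)
      by_cases h : Disjoint (bb d b) V
      · right
        simp only [hV', Set.mem_iUnion]
        exact ⟨b, ⟨hbU, h⟩, hb⟩
      · left
        obtain ⟨w, hw1, hw2⟩ := Set.not_disjoint_iff.1 h
        simp only [hV, Set.mem_iUnion] at hw2 ⊢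
        obtain ⟨n, b', hr, hw⟩ := hw2
        exact ⟨n + 1, b, ⟨hbU, b', ⟨w, hw, hw1⟩, hr⟩, hb⟩
    have := isPreconnected_connectedComponentIn.subset_left_of_subset_union hVo hV'o hdis hcov
      ⟨p, mem_connectedComponentIn hp, hpV⟩ hq
    simp only [hV, Set.mem_iUnion] at this
    obtain ⟨n, b, h1, h2⟩ := this
    exact ⟨n, b, h1, h2⟩
  · rintro ⟨n, b, hr, hq⟩
    exact reach_subset n b hr hq

/-! ### Measurability -/

/-- The complement of the cutters of index above `k`. -/
def UU {d : ℕ} (γ : Config d) (k : ℕ) : Set (Fin d → ℝ) := (⋃ j ∈ {j : ℕ | k < j}, cutters γ j)ᶜ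

lemma measurableSet_seed {d : ℕ} (k : ℕ) (x : Site d) :
    MeasurableSet {γ : Config d | IsSeed γ k x} := by
  have : {γ : Config d | IsSeed γ k x} = (fun γ : Config d => γ x) ⁻¹' {true} ∩
      ⋂ n : ℕ, ⋂ (_ : 1 ≤ n), ⋂ (_ : n ≤ k - 1),
        (fun γ : Config d => γ (x + (n : ℤ) • e1 d)) ⁻¹' {false} := by
    ext γ; simp [IsSeed]
  rw [this]
  refine (measurable_pi_apply _ (MeasurableSet.singleton _)).inter ?_
  refine MeasurableSet.iInter fun n => MeasurableSet.iInter fun _ => MeasurableSet.iInter fun _ =>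
    measurable_pi_apply _ (MeasurableSet.singleton _)

lemma mem_UU_iff {d : ℕ} {γ : Config d} {k : ℕ} {p : Fin d → ℝ} :
    p ∈ UU γ k ↔ ∀ j, k < j → ∀ x : Site d, IsSeed γ j (x - ss d j) → ‖p - toR x‖ ≠ rr d j := by
  simp [UU, cutters]

lemma measurableSet_sub_UU {d : ℕ} (k : ℕ) (B : Set (Fin d → ℝ)) :
    MeasurableSet {γ : Config d | B ⊆ UU γ k} := by
  have : {γ : Config d | B ⊆ UU γ k} = ⋂ j : ℕ, ⋂ (_ : k < j), ⋂ x : Site d,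
      ⋂ (_ : ∃ p ∈ B, ‖p - toR x‖ = rr d j), {γ : Config d | IsSeed γ j (x - ss d j)}ᶜ := by
    ext γ
    simp only [Set.subset_def, mem_UU_iff, Set.mem_ofPred_eq, Set.mem_iInter, Set.mem_compl_iff]
    constructor
    · rintro h j hj x ⟨p, hp, hpx⟩ hs
      exact h p hp j hj x hs hpx
    · intro h p hp j hj x hs hpx
      exact h j hj x ⟨p, hp, hpx⟩ hs
  rw [this]
  exact MeasurableSet.iInter fun j => MeasurableSet.iInter fun _ => MeasurableSet.iInter fun x =>
    MeasurableSet.iInter fun _ => (measurableSet_seed _ _).compl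

lemma measurableSet_reach {d : ℕ} (k : ℕ) (p : Fin d → ℝ) (n : ℕ) :
    ∀ b, MeasurableSet {γ : Config d | reach (UU γ k) p n b} := by
  induction n with
  | zero =>
    intro b
    exact (measurableSet_sub_UU k _).inter (MeasurableSet.const _)
  | succ n ih =>
    intro b
    refine (measurableSet_sub_UU k _).inter ?_
    have : {γ : Config d | ∃ b', (bb d b' ∩ bb d b).Nonempty ∧ reach (UU γ k) p n b'} =
        ⋃ b', ⋃ (_ : (bb d b' ∩ bb d b).Nonempty), {γ | reach (UU γ k) p n b'} := by
      ext γ; simp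
    change MeasurableSet {γ : Config d | ∃ b', (bb d b' ∩ bb d b).Nonempty ∧ reach (UU γ k) p n b'}
    rw [this]
    exact MeasurableSet.iUnion fun b' => MeasurableSet.iUnion fun _ => ih b'

lemma nullMeasurableSet_clump {d : ℕ} {P : Measure (Config d)} {k : ℕ}
    (hopen : ∀ᵐ γ ∂P, IsOpen (UU γ k)) (x y : Site d) :
    NullMeasurableSet {γ | y ∈ clump γ k x} P := by
  have hm : MeasurableSet {γ : Config d | ∃ n b, reach (UU γ k) (toR x) n b ∧ toR y ∈ bb d b} := by
    have : {γ : Config d | ∃ n b, reach (UU γ k) (toR x) n b ∧ toR y ∈ bb d b} =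
        ⋃ n, ⋃ b, ⋃ (_ : toR y ∈ bb d b), {γ | reach (UU γ k) (toR x) n b} := by
      ext γ; simp [and_comm]
    rw [this]
    exact MeasurableSet.iUnion fun n => MeasurableSet.iUnion fun b => MeasurableSet.iUnion fun _ =>
      measurableSet_reach _ _ _ _
  refine hm.nullMeasurableSet.congr ?_
  filter_upwards [hopen] with γ hγ
  exact propext (mem_cc_iff hγ).symm

/-! ### Deterministic facts on clumps -/

lemma rr_ne_int {d : ℕ} (hd : 1 ≤ d) (j : ℕ) (m : ℤ) : (m : ℝ) ≠ rr d j := by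
  intro h
  have h1 : ((2 : ℝ) ^ j * (j : ℝ) ^ 2) ^ ((d : ℝ)⁻¹) = (2 * m - 1) / 2 := by
    unfold rr at h; linarith
  have h2 : (2 : ℝ) ^ j * (j : ℝ) ^ 2 = ((2 * m - 1) / 2) ^ d := by
    rw [← h1, Real.rpow_inv_natCast_pow (by positivity) (by omega)]
  rw [div_pow, _root_.eq_div_iff (by positivity)] at h2
  have h3 : (2 : ℤ) ^ j * (j : ℤ) ^ 2 * 2 ^ d = (2 * m - 1) ^ d := by exact_mod_cast h2
  have ho : Odd ((2 * m - 1) ^ d) := Odd.pow ⟨m - 1, by ring⟩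
  rw [← h3] at ho
  have he : Even ((2 : ℤ) ^ j * (j : ℤ) ^ 2 * 2 ^ d) :=
    Even.mul_left ((even_two).pow_of_ne_zero (by omega)) _
  exact (Int.not_even_iff_odd.2 ho) he

lemma norm_toR_sub_int {d : ℕ} (hd : 1 ≤ d) (x y : Site d) : ∃ m : ℤ, ‖toR x - toR y‖ = m := by
  have : ‖toR x - toR y‖ = ‖x - y‖ := by
    simp only [Pi.norm_def]
    congr 1
    refine Finset.sup_congr rfl fun i _ => ?_
    ext
    simp [← Int.norm_cast_real, toR]
  rw [this]
  have : Nonempty (Fin d) := ⟨⟨0, hd⟩⟩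
  obtain ⟨i, hi⟩ := Finite.exists_max (fun i => ‖(x - y) i‖)
  refine ⟨|(x - y) i|, ?_⟩
  rw [le_antisymm ((pi_norm_le_iff_of_nonneg (norm_nonneg _)).2 hi) (norm_le_pi_norm _ i),
    Int.norm_eq_abs]
  simp

lemma toR_mem_UU {d : ℕ} (hd : 1 ≤ d) (γ : Config d) (k : ℕ) (x : Site d) : toR x ∈ UU γ k := by
  rw [mem_UU_iff]
  intro j _ y _ h
  obtain ⟨m, hm⟩ := norm_toR_sub_int hd x y
  exact rr_ne_int hd j m (hm ▸ h)

lemma mem_clump_self {d : ℕ} (hd : 1 ≤ d) (γ : Config d) (k : ℕ) (x : Site d) :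
    x ∈ clump γ k x := mem_connectedComponentIn (toR_mem_UU hd γ k x)

lemma clump_eq {d : ℕ} {γ : Config d} {k : ℕ} {x y : Site d} (h : y ∈ clump γ k x) :
    clump γ k x = clump γ k y := by
  have := connectedComponentIn_eq (show toR y ∈ connectedComponentIn (UU γ k) (toR x) from h)
  ext z
  change toR z ∈ connectedComponentIn (UU γ k) (toR x) ↔ toR z ∈ connectedComponentIn (UU γ k) (toR y)
  rw [this]

lemma mem_clump_comm {d : ℕ} (hd : 1 ≤ d) {γ : Config d} {k : ℕ} {x y : Site d} :
    y ∈ clump γ k x ↔ x ∈ clump γ k y :=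
  ⟨fun h => clump_eq h ▸ mem_clump_self hd γ k x, fun h => clump_eq h ▸ mem_clump_self hd γ k y⟩

lemma toR_add {d : ℕ} (x y : Site d) : toR (x + y) = toR x + toR y := by
  ext i; simp [toR]

lemma seed_shift {d : ℕ} (γ : Config d) (z x : Site d) (k : ℕ) :
    IsSeed (shiftCfg z γ) k (x + z) ↔ IsSeed γ k x := by
  simp only [IsSeed, shiftCfg, add_sub_cancel_right, add_right_comm x z]

lemma mem_UU_shift {d : ℕ} (γ : Config d) (k : ℕ) (z : Site d) (p : Fin d → ℝ) :
    p + toR z ∈ UU (shiftCfg z γ) k ↔ p ∈ UU γ k := by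
  simp only [mem_UU_iff]
  refine forall₂_congr fun j _ => ?_
  constructor
  · intro h x hx
    have := h (x + z) (by rw [add_sub_right_comm, seed_shift]; exact hx)
    rwa [toR_add, add_sub_add_right_eq_sub] at this
  · intro h x hx
    obtain ⟨y, rfl⟩ : ∃ y, x = y + z := ⟨x - z, by simp⟩
    rw [add_sub_right_comm, seed_shift] at hx
    rw [toR_add, add_sub_add_right_eq_sub]
    exact h y hx

lemma mem_clump_shift_aux {d : ℕ} (hd : 1 ≤ d) (γ : Config d) (k : ℕ) (z x y : Site d)
    (h : y ∈ clump γ k x) : y + z ∈ clump (shiftCfg z γ) k (x + z) := by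
  change toR (y + z) ∈ connectedComponentIn (UU (shiftCfg z γ) k) (toR (x + z))
  have h' : toR y ∈ connectedComponentIn (UU γ k) (toR x) := h
  rw [toR_add, toR_add]
  have hc : Continuous fun p : Fin d → ℝ => p + toR z := continuous_id.add continuous_const
  have := (isPreconnected_connectedComponentIn (x := toR x) (F := UU γ k)).image _ hc.continuousOn
  refine this.subset_connectedComponentIn
    ⟨toR x, mem_connectedComponentIn (toR_mem_UU hd γ k x), rfl⟩ ?_ ⟨toR y, h', rfl⟩
  rintro _ ⟨p, hp, rfl⟩
  exact (mem_UU_shift γ k z p).2 (connectedComponentIn_subset _ _ hp)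

lemma mem_clump_shift {d : ℕ} (hd : 1 ≤ d) (γ : Config d) (k : ℕ) (z x y : Site d) :
    y + z ∈ clump (shiftCfg z γ) k (x + z) ↔ y ∈ clump γ k x := by
  refine ⟨fun h => ?_, mem_clump_shift_aux hd γ k z x y⟩
  have := mem_clump_shift_aux hd _ k (-z) _ _ h
  have h2 : shiftCfg (-z) (shiftCfg z γ) = γ := by
    funext w; simp [shiftCfg]
  rw [h2] at this
  simpa using this

/-! ### Local finiteness of the cutters -/

lemma seed_prob {d : ℕ} (hd : 1 ≤ d) {P : Measure (Config d)} (hP : IsBernoulliHalfProduct P)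
    (j : ℕ) (x : Site d) : P {γ | IsSeed γ j x} ≤ (1 / 2 : ℝ≥0∞) ^ j := by
  classical
  have hinj : Function.Injective (fun n : ℕ => x + (n : ℤ) • e1 d) := by
    intro n m h
    have := congrFun h ⟨0, hd⟩
    simpa [e1] using this
  have hc : ((Finset.range j).image (fun n : ℕ => x + (n : ℤ) • e1 d)).card = j := by
    rw [Finset.card_image_of_injective _ hinj, Finset.card_range]
  have := hP.2 ((Finset.range j).image (fun n : ℕ => x + (n : ℤ) • e1 d)) (fun y => decide (y = x))
  rw [hc] at this
  rw [← this]
  refine measure_mono ?_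
  rintro γ ⟨h1, h2⟩ y hy
  obtain ⟨n, hn, rfl⟩ := Finset.mem_image.1 hy
  rw [Finset.mem_range] at hn
  rcases Nat.eq_zero_or_pos n with rfl | hn0
  · simpa using h1
  · rw [h2 n hn0 (by omega)]
    symm
    rw [decide_eq_false_iff_not]
    intro h
    have := @hinj n 0 (by simpa using h)
    omega

/-- Lattice sites at distance within `R` of `r` from the origin (a superset). -/
def annulus (d : ℕ) (r : ℝ) (R : ℕ) : Finset (Site d) :=
  Finset.univ.biUnion fun i : Fin d => Fintype.piFinset fun l =>
    if l = i then Finset.Icc ⌈r - R⌉ ⌊r + R⌋ ∪ Finset.Icc (-⌊r + R⌋) (-⌈r - R⌉)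
    else Finset.Icc (-⌊r + R⌋) ⌊r + R⌋

lemma mem_annulus {d : ℕ} (hd : 1 ≤ d) {r : ℝ} {R : ℕ} {x : Site d}
    (h1 : ‖toR x‖ ≤ r + R) (h2 : r - R ≤ ‖toR x‖) : x ∈ annulus d r R := by
  have : Nonempty (Fin d) := ⟨⟨0, hd⟩⟩
  obtain ⟨i, hi⟩ := Finite.exists_max (fun i => ‖toR x i‖)
  have hn : ‖toR x‖ = ‖toR x i‖ :=
    le_antisymm ((pi_norm_le_iff_of_nonneg (norm_nonneg _)).2 hi) (norm_le_pi_norm _ i)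
  have hall : ∀ l, -⌊r + R⌋ ≤ x l ∧ x l ≤ ⌊r + R⌋ := by
    intro l
    have h := (norm_le_pi_norm (toR x) l).trans h1
    rw [Real.norm_eq_abs, abs_le] at h
    simp only [toR] at h
    constructor
    · rw [neg_le, Int.le_floor]; push_cast; linarith
    · rw [Int.le_floor]; linarith
  simp only [annulus, Finset.mem_biUnion, Finset.mem_univ, true_and, Fintype.mem_piFinset]
  refine ⟨i, fun l => ?_⟩
  split_ifs with h
  · subst h
    rw [Finset.mem_union, Finset.mem_Icc, Finset.mem_Icc]
    rw [hn, Real.norm_eq_abs] at h2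
    simp only [toR] at h2
    rcases le_abs.1 h2 with h | h
    · left; exact ⟨Int.ceil_le.2 h, (hall l).2⟩
    · right; refine ⟨(hall l).1, ?_⟩
      rw [le_neg, Int.ceil_le]; push_cast; exact h
  · exact Finset.mem_Icc.2 (hall l)

lemma card_annulus {d : ℕ} {r : ℝ} {R : ℕ} (hr : 0 ≤ r) :
    ((annulus d r R).card : ℝ) ≤ d * ((4 * R + 2) * (2 * (r + R) + 1) ^ (d - 1)) := by
  have hf1 := Int.floor_le (r + R)
  have hf0 : 0 ≤ ⌊r + R⌋ := Int.floor_nonneg.2 (by positivity)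
  have hc1 := Int.le_ceil (r - R)
  have hS : ((Finset.Icc ⌈r - R⌉ ⌊r + R⌋ ∪ Finset.Icc (-⌊r + R⌋) (-⌈r - R⌉)).card : ℝ)
      ≤ 4 * R + 2 := by
    have h1 := Finset.card_union_le (Finset.Icc ⌈r - R⌉ ⌊r + R⌋) (Finset.Icc (-⌊r + R⌋) (-⌈r - R⌉))
    rw [Int.card_Icc, Int.card_Icc] at h1
    have h2 : ⌊r + R⌋ - ⌈r - R⌉ ≤ 2 * R := by
      have : ((⌊r + R⌋ - ⌈r - R⌉ : ℤ) : ℝ) ≤ ((2 * R : ℤ) : ℝ) := by push_cast; linarith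
      exact_mod_cast this
    have h3 : (Finset.Icc ⌈r - R⌉ ⌊r + R⌋ ∪ Finset.Icc (-⌊r + R⌋) (-⌈r - R⌉)).card
      ≤ 4 * R + 2 := by omega
    exact_mod_cast h3
  have hT : ((Finset.Icc (-⌊r + R⌋) ⌊r + R⌋).card : ℝ) ≤ 2 * (r + R) + 1 := by
    rw [Int.card_Icc]
    have h : ((⌊r + R⌋ + 1 - -⌊r + R⌋).toNat : ℤ) = 2 * ⌊r + R⌋ + 1 := by omega
    have h' : ((⌊r + R⌋ + 1 - -⌊r + R⌋).toNat : ℝ) = 2 * ⌊r + R⌋ + 1 := by exact_mod_cast h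
    rw [h']; linarith
  have hb := Finset.card_biUnion_le (s := (Finset.univ : Finset (Fin d)))
    (t := fun i : Fin d => Fintype.piFinset fun l =>
    if l = i then Finset.Icc ⌈r - R⌉ ⌊r + R⌋ ∪ Finset.Icc (-⌊r + R⌋) (-⌈r - R⌉)
    else Finset.Icc (-⌊r + R⌋) ⌊r + R⌋)
  calc ((annulus d r R).card : ℝ) ≤ ∑ i : Fin d, ((Fintype.piFinset fun l =>
          if l = i then Finset.Icc ⌈r - R⌉ ⌊r + R⌋ ∪ Finset.Icc (-⌊r + R⌋) (-⌈r - R⌉)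
          else Finset.Icc (-⌊r + R⌋) ⌊r + R⌋).card : ℝ) := by exact_mod_cast hb
    _ ≤ ∑ i : Fin d, ((4 * R + 2) * (2 * (r + R) + 1) ^ (d - 1)) := by
        refine Finset.sum_le_sum fun i _ => ?_
        rw [Fintype.card_piFinset, Nat.cast_prod, ← Finset.mul_prod_erase _ _ (Finset.mem_univ i)]
        rw [if_pos rfl]
        refine mul_le_mul hS ?_ (by positivity) (by positivity)
        have : ∏ l ∈ Finset.univ.erase i, (((if l = i then
            Finset.Icc ⌈r - R⌉ ⌊r + R⌋ ∪ Finset.Icc (-⌊r + R⌋) (-⌈r - R⌉)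
            else Finset.Icc (-⌊r + R⌋) ⌊r + R⌋).card : ℕ) : ℝ)
            ≤ ∏ l ∈ Finset.univ.erase i, (2 * (r + R) + 1) := by
          refine Finset.prod_le_prod (fun _ _ => by positivity) fun l hl => ?_
          rw [if_neg (Finset.ne_of_mem_erase hl)]
          exact hT
        refine this.trans_eq ?_
        rw [Finset.prod_const, Finset.card_erase_of_mem (Finset.mem_univ i)]
        simp
    _ = _ := by simp

lemma bound_term {d : ℕ} (hd : 1 ≤ d) {j : ℕ} (hj : 1 ≤ j) (R : ℕ) :
    ((annulus d (rr d j) R).card : ℝ) * (1 / 2) ^ j ≤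
      (d * ((4 * R + 2) * (2 * R + 4) ^ (d - 1))) *
        ((j : ℝ) ^ 2 * (((2 : ℝ) ^ ((d : ℝ)⁻¹))⁻¹) ^ j) := by
  set a : ℝ := ((2 : ℝ) ^ j * (j : ℝ) ^ 2) ^ ((d : ℝ)⁻¹) with ha
  set β : ℝ := (2 : ℝ) ^ ((d : ℝ)⁻¹) with hβ
  have hβ0 : 0 < β := by positivity
  have had : a ^ d = (2 : ℝ) ^ j * (j : ℝ) ^ 2 :=
    Real.rpow_inv_natCast_pow (by positivity) (by omega)
  have hβd : β ^ d = 2 := Real.rpow_inv_natCast_pow (by positivity) (by omega)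
  have hj1 : (1 : ℝ) ≤ (j : ℝ) ^ 2 := one_le_pow₀ (by exact_mod_cast hj)
  have ha0 : 0 ≤ a := by positivity
  have hβa : β ^ j ≤ a := by
    rw [← pow_le_pow_iff_left₀ (by positivity) ha0 (show d ≠ 0 by omega), had, ← pow_mul, mul_comm,
      pow_mul, hβd]
    exact le_mul_of_one_le_right (by positivity) hj1
  have ha1 : 1 ≤ a := by
    rw [← pow_le_pow_iff_left₀ (by positivity) ha0 (show d ≠ 0 by omega), had, one_pow]
    exact one_le_mul_of_one_le_of_one_le (one_le_pow₀ (by norm_num)) hj1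
  have hr : rr d j = a + 1 / 2 := rfl
  have hc := card_annulus (d := d) (R := R) (show 0 ≤ rr d j by rw [hr]; positivity)
  have h1 : 2 * (rr d j + R) + 1 ≤ (2 * R + 4) * a := by
    rw [hr]
    nlinarith [mul_le_mul_of_nonneg_left ha1 (Nat.cast_nonneg (α := ℝ) R)]
  have h2 : (2 * (rr d j + R) + 1) ^ (d - 1) ≤ (2 * R + 4) ^ (d - 1) * a ^ (d - 1) := by
    rw [← mul_pow]
    exact pow_le_pow_left₀ (by rw [hr]; positivity) h1 _
  have h3 : a ^ (d - 1) * (1 / 2) ^ j ≤ (j : ℝ) ^ 2 * (β⁻¹) ^ j := by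
    rw [inv_pow, ← div_eq_mul_inv, le_div_iff₀ (by positivity), one_div, inv_pow, mul_right_comm,
      ← div_eq_mul_inv, div_le_iff₀ (by positivity), mul_comm ((j : ℝ) ^ 2), ← had]
    calc a ^ (d - 1) * β ^ j ≤ a ^ (d - 1) * a := by gcongr
      _ = a ^ d := by rw [← pow_succ]; congr 1; omega
  calc ((annulus d (rr d j) R).card : ℝ) * (1 / 2) ^ j
      ≤ (d * ((4 * R + 2) * ((2 * R + 4) ^ (d - 1) * a ^ (d - 1)))) * (1 / 2) ^ j := by
        refine mul_le_mul_of_nonneg_right (hc.trans ?_) (by positivity)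
        gcongr
    _ = (d * ((4 * R + 2) * (2 * R + 4) ^ (d - 1))) * (a ^ (d - 1) * (1 / 2) ^ j) := by ring
    _ ≤ _ := by gcongr

lemma ae_locally_finite {d : ℕ} (hd : 1 ≤ d) {P : Measure (Config d)}
    (hP : IsBernoulliHalfProduct P) (R : ℕ) :
    ∀ᵐ γ ∂P, ∀ᶠ j in Filter.atTop,
      γ ∉ {γ : Config d | 1 ≤ j ∧ ∃ x ∈ annulus d (rr d j) R, IsSeed γ j (x - ss d j)} := by
  apply ae_eventually_notMem
  set g : ℕ → ℝ := fun j => (d * ((4 * R + 2) * (2 * R + 4) ^ (d - 1))) *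
        ((j : ℝ) ^ 2 * (((2 : ℝ) ^ ((d : ℝ)⁻¹))⁻¹) ^ j) with hg
  have hsum : Summable g := by
    refine Summable.mul_left _ (summable_pow_mul_geometric_of_norm_lt_one 2 ?_)
    rw [norm_inv, Real.norm_of_nonneg (by positivity)]
    exact inv_lt_one_of_one_lt₀ (Real.one_lt_rpow (by norm_num) (by positivity))
  refine ne_top_of_le_ne_top hsum.tsum_ofReal_ne_top (ENNReal.tsum_le_tsum fun j => ?_)
  by_cases hj : 1 ≤ j
  · have hsub : {γ : Config d | 1 ≤ j ∧ ∃ x ∈ annulus d (rr d j) R, IsSeed γ j (x - ss d j)}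
        ⊆ ⋃ x ∈ annulus d (rr d j) R, {γ | IsSeed γ j (x - ss d j)} := by
      rintro γ ⟨_, x, hx, hs⟩
      simp only [Set.mem_iUnion]
      exact ⟨x, hx, hs⟩
    refine (measure_mono hsub).trans ((measure_biUnion_finset_le _ _).trans ?_)
    refine (Finset.sum_le_sum fun x _ => seed_prob hd hP j _).trans ?_
    rw [Finset.sum_const, nsmul_eq_mul]
    have : ((annulus d (rr d j) R).card : ℝ≥0∞) * (1 / 2) ^ j =
        ENNReal.ofReal (((annulus d (rr d j) R).card : ℝ) * (1 / 2) ^ j) := by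
      rw [ENNReal.ofReal_mul (by positivity), ENNReal.ofReal_natCast,
        ENNReal.ofReal_pow (by positivity), ENNReal.ofReal_div_of_pos (by norm_num)]
      simp
    rw [this]
    exact ENNReal.ofReal_le_ofReal (bound_term hd hj R)
  · have : {γ : Config d | 1 ≤ j ∧ ∃ x ∈ annulus d (rr d j) R, IsSeed γ j (x - ss d j)} = ∅ := by
      ext γ
      simp [hj]
    rw [this]
    simp

lemma ae_isOpen_UU {d : ℕ} (hd : 1 ≤ d) {P : Measure (Config d)}
    (hP : IsBernoulliHalfProduct P) (k : ℕ) : ∀ᵐ γ ∂P, IsOpen (UU γ k) := by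
  filter_upwards [ae_all_iff.2 fun R => ae_locally_finite hd hP R] with γ hγ
  let f : {i : ℕ × Site d // k < i.1 ∧ IsSeed γ i.1 (i.2 - ss d i.1)} → Set (Fin d → ℝ) :=
    fun i => {q | ‖q - toR i.1.2‖ = rr d i.1.1}
  have hU : UU γ k = (⋃ i, f i)ᶜ := by
    ext p
    rw [mem_UU_iff]
    simp only [f, Set.mem_compl_iff, Set.mem_iUnion, Set.mem_ofPred_eq, Subtype.exists, Prod.exists,
      not_exists, exists_prop, not_and]
    exact ⟨fun h j x h' => h j h'.1 x h'.2, fun h j hj x hx => h j x ⟨hj, hx⟩⟩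
  rw [hU, isOpen_compl_iff]
  refine LocallyFinite.isClosed_iUnion ?_ ?_
  · intro p
    refine ⟨Metric.ball p 1, Metric.ball_mem_nhds p one_pos, ?_⟩
    obtain ⟨R, hR⟩ := exists_nat_ge (‖p‖ + 1)
    obtain ⟨J, hJ⟩ := Filter.eventually_atTop.1 (hγ R)
    have hfin : (⋃ j ∈ Set.Iio J, Set.image (fun x : Site d => (j, x))
        (annulus d (rr d j) R : Set (Site d))).Finite :=
      (Set.finite_Iio J).biUnion fun j _ => (Finset.finite_toSet _).image _
    refine (hfin.preimage (f := Subtype.val) Subtype.val_injective.injOn).subset ?_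
    rintro ⟨⟨j, x⟩, hj, hx⟩ ⟨q, hq, hqb⟩
    have hq' : ‖q - toR x‖ = rr d j := hq
    have hqR : ‖q‖ ≤ R := by
      have h1 : ‖q - p‖ < 1 := by rw [← dist_eq_norm]; exact hqb
      have h2 := norm_sub_norm_le q p
      linarith
    have hxa : x ∈ annulus d (rr d j) R := by
      have h1 := norm_sub_norm_le (toR x) q
      rw [norm_sub_rev, hq'] at h1
      have h2 := norm_sub_le q (toR x)
      rw [hq'] at h2
      exact mem_annulus hd (by linarith) (by linarith)
    simp only [Set.mem_preimage, Set.mem_iUnion]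
    refine ⟨j, ?_, x, hxa, rfl⟩
    by_contra hJj
    exact hJ j (not_lt.1 hJj) ⟨by simp only at hj; omega, x, hxa, hx⟩
  · intro i
    exact isClosed_eq (by fun_prop) continuous_const

/-! ### Mass transport -/

/-- The cardinality of the clump as an extended nonnegative real. -/
def cc {d : ℕ} (k : ℕ) (x : Site d) (γ : Config d) : ℝ≥0∞ :=
  ∑' y, {γ | y ∈ clump γ k x}.indicator (fun _ => (1 : ℝ≥0∞)) γ

/-- The mass sent from `x` to `y`. -/
def mass {d : ℕ} (Φ : Config d → Site d → Site d) (k : ℕ) (x y : Site d) (γ : Config d) : ℝ≥0∞ :=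
  {γ | Φ γ x ∉ clump γ k x ∧ y ∈ clump γ k x}.indicator (fun γ => (cc k x γ)⁻¹) γ

lemma tsum_ind {α : Type*} {s : Set α} (hs : s.Finite) (a : ℝ≥0∞) (f : α → ℝ≥0∞)
    (h1 : ∀ y ∈ s, f y = a) (h0 : ∀ y ∉ s, f y = 0) : ∑' y, f y = s.ncard * a := by
  rw [tsum_eq_sum (s := hs.toFinset) (fun y hy => h0 y (by simpa using hy)),
    Finset.sum_congr rfl (fun y hy => h1 y (by simpa using hy)), Finset.sum_const, nsmul_eq_mul,
    Set.ncard_eq_toFinset_card s hs]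

lemma cc_eq {d : ℕ} {k : ℕ} {x : Site d} {γ : Config d} (h : (clump γ k x).Finite) :
    cc k x γ = (clump γ k x).ncard := by
  unfold cc
  rw [tsum_ind h 1 (fun y => {γ | y ∈ clump γ k x}.indicator (fun _ => (1 : ℝ≥0∞)) γ)
    (fun y hy => Set.indicator_of_mem (s := {γ | y ∈ clump γ k x}) hy _)
    (fun y hy => Set.indicator_of_notMem (s := {γ | y ∈ clump γ k x}) hy _), mul_one]

lemma cc_shift {d : ℕ} (hd : 1 ≤ d) (k : ℕ) (x z : Site d) (γ : Config d) :
    cc k (x + z) (shiftCfg z γ) = cc k x γ := by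
  classical
  unfold cc
  rw [← (Equiv.addRight z).tsum_eq]
  refine tsum_congr fun y => ?_
  have hi := mem_clump_shift hd γ k z x y
  simp only [Set.indicator, Set.mem_ofPred_eq, Equiv.coe_addRight, hi]

lemma mass_shift {d : ℕ} (hd : 1 ≤ d) (Φ : Config d → Site d → Site d) (k : ℕ) (x y z : Site d)
    (γ : Config d) (h : Φ (shiftCfg z γ) (x + z) = Φ γ x + z) :
    mass Φ k (x + z) (y + z) (shiftCfg z γ) = mass Φ k x y γ := by
  have hi : (Φ (shiftCfg z γ) (x + z) ∉ clump (shiftCfg z γ) k (x + z) ∧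
      y + z ∈ clump (shiftCfg z γ) k (x + z)) ↔ (Φ γ x ∉ clump γ k x ∧ y ∈ clump γ k x) := by
    rw [h, mem_clump_shift hd, mem_clump_shift hd]
  simp only [mass, Set.indicator, Set.mem_ofPred_eq, cc_shift hd]
  split_ifs with h1 h2 h2
  · rfl
  · exact absurd (hi.1 h1) h2
  · exact absurd (hi.2 h2) h1
  · rfl

lemma aemeasurable_cc {d : ℕ} {P : Measure (Config d)} {k : ℕ}
    (hopen : ∀ᵐ γ ∂P, IsOpen (UU γ k)) (x : Site d) : AEMeasurable (cc k x) P := by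
  unfold cc
  exact AEMeasurable.tsum fun y =>
    aemeasurable_const.indicator₀ (nullMeasurableSet_clump hopen x y)

lemma nullMeasurableSet_bad {d : ℕ} {P : Measure (Config d)} {k : ℕ}
    (hopen : ∀ᵐ γ ∂P, IsOpen (UU γ k)) (Φ : Config d → Site d → Site d)
    (hΦ : ∀ x : Site d, Measurable fun γ => Φ γ x) (x : Site d) :
    NullMeasurableSet {γ | Φ γ x ∉ clump γ k x} P := by
  have : {γ | Φ γ x ∉ clump γ k x} =
      (⋃ y, (fun γ => Φ γ x) ⁻¹' {y} ∩ {γ | y ∈ clump γ k x})ᶜ := by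
    ext γ; simp
  rw [this]
  exact (NullMeasurableSet.iUnion fun y =>
    (hΦ x (MeasurableSet.singleton y)).nullMeasurableSet.inter
      (nullMeasurableSet_clump hopen x y)).compl

lemma aemeasurable_mass {d : ℕ} {P : Measure (Config d)} {k : ℕ}
    (hopen : ∀ᵐ γ ∂P, IsOpen (UU γ k)) (Φ : Config d → Site d → Site d)
    (hΦ : ∀ x : Site d, Measurable fun γ => Φ γ x) (x y : Site d) :
    AEMeasurable (mass Φ k x y) P :=
  (aemeasurable_cc hopen x).inv.indicator₀
    ((nullMeasurableSet_bad hopen Φ hΦ x).inter (nullMeasurableSet_clump hopen x y))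

lemma mass_out {d : ℕ} (hd : 1 ≤ d) (Φ : Config d → Site d → Site d) (k : ℕ) (γ : Config d)
    (x : Site d) (h : (clump γ k x).Finite) :
    ∑' y, mass Φ k x y γ = {γ | Φ γ x ∉ clump γ k x}.indicator (fun _ => (1 : ℝ≥0∞)) γ := by
  by_cases hb : Φ γ x ∉ clump γ k x
  · rw [tsum_ind h (cc k x γ)⁻¹ (fun y => mass Φ k x y γ)
      (fun y hy => Set.indicator_of_mem
        (s := {γ | Φ γ x ∉ clump γ k x ∧ y ∈ clump γ k x}) ⟨hb, hy⟩ _)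
      (fun y hy => Set.indicator_of_notMem
        (s := {γ | Φ γ x ∉ clump γ k x ∧ y ∈ clump γ k x}) (fun h => hy h.2) _),
      Set.indicator_of_mem (by exact hb), cc_eq h]
    refine ENNReal.mul_inv_cancel ?_ (ENNReal.natCast_ne_top _)
    rw [Nat.cast_ne_zero]
    exact Set.ncard_ne_zero_of_mem (mem_clump_self hd γ k x) h
  · rw [Set.indicator_of_notMem (by exact hb), ENNReal.tsum_eq_zero]
    exact fun y => Set.indicator_of_notMem (fun h => hb h.1) _

lemma mass_in {d : ℕ} (hd : 1 ≤ d) (Φ : Config d → Site d → Site d) (k : ℕ) (γ : Config d)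
    (y : Site d) (h : (clump γ k y).Finite) :
    ∑' x, mass Φ k x y γ = ({x ∈ clump γ k y | Φ γ x ∉ clump γ k y}.ncard : ℝ≥0∞)
      * ((clump γ k y).ncard : ℝ≥0∞)⁻¹ := by
  refine tsum_ind (h.subset fun x hx => hx.1) _ _ ?_ ?_
  · rintro x ⟨hx1, hx2⟩
    have he := clump_eq hx1
    have hm : Φ γ x ∉ clump γ k x ∧ y ∈ clump γ k x :=
      ⟨he ▸ hx2, (mem_clump_comm hd).1 hx1⟩
    unfold mass
    rw [Set.indicator_of_mem (by exact hm), cc_eq (he ▸ h), ← he]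
  · intro x hx
    refine Set.indicator_of_notMem (fun hm => hx ?_) _
    obtain ⟨h1, h2⟩ := hm
    have he := clump_eq h2
    exact ⟨(mem_clump_comm hd).1 h2, he ▸ h1⟩

/-- For every `k ≥ 1` the probability that the origin is `k`-bad equals
`E[(1/|L_k|) |Σ_{x ∈ L_k} (2γ(x) - 1)|]`. -/
theorem statement9 (d : ℕ) (hd : 1 ≤ d)
    (P : Measure (Config d)) (hP : IsBernoulliHalfProduct P)
    (Φ : Config d → Site d → Site d)
    (hΦ : IsMatchingRule P Φ) (heq : IsEquivariant P Φ)
    (hmax : MatchesMaximally P Φ) :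
    ∀ k : ℕ, 1 ≤ k →
      (P {γ | Φ γ 0 ∉ clump γ k 0}).toReal
        = ∫ γ, (1 / ((clump γ k 0).ncard : ℝ))
            * ((∑ᶠ y ∈ clump γ k 0, pm1 γ y).natAbs : ℝ) ∂P := by
  intro k hk
  have hopen := ae_isOpen_UU hd hP k
  have hmeas := aemeasurable_mass (k := k) hopen Φ hΦ.1
  have hstep : ∀ y : Site d, ∫⁻ γ, mass Φ k 0 y γ ∂P = ∫⁻ γ, mass Φ k (-y) 0 γ ∂P := by
    intro y
    have hmp := measurePreserving_shift hP (-y)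
    calc ∫⁻ γ, mass Φ k 0 y γ ∂P = ∫⁻ γ, mass Φ k (-y) 0 (shiftCfg (-y) γ) ∂P := by
          refine lintegral_congr_ae ?_
          filter_upwards [heq (-y) 0] with γ hγ
          have := mass_shift hd Φ k 0 y (-y) γ hγ
          rw [zero_add, add_neg_cancel] at this
          exact this.symm
      _ = ∫⁻ γ, mass Φ k (-y) 0 γ ∂(P.map (shiftCfg (-y))) :=
          (lintegral_map' (by rw [hmp.map_eq]; exact hmeas _ _) hmp.measurable.aemeasurable).symm
      _ = _ := by rw [hmp.map_eq]
  have hprob : P {γ | Φ γ 0 ∉ clump γ k 0} = ∫⁻ γ, ∑' x, mass Φ k x 0 γ ∂P := by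
    calc P {γ | Φ γ 0 ∉ clump γ k 0}
        = ∫⁻ γ, {γ | Φ γ 0 ∉ clump γ k 0}.indicator (fun _ => (1 : ℝ≥0∞)) γ ∂P := by
          rw [lintegral_indicator_const₀ (nullMeasurableSet_bad hopen Φ hΦ.1 0), one_mul]
      _ = ∫⁻ γ, ∑' y, mass Φ k 0 y γ ∂P := by
          refine lintegral_congr_ae ?_
          filter_upwards [hmax] with γ hγ
          exact (mass_out hd Φ k γ 0 (hγ k hk 0).1).symm
      _ = ∑' y, ∫⁻ γ, mass Φ k 0 y γ ∂P := lintegral_tsum fun y => hmeas 0 y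
      _ = ∑' y, ∫⁻ γ, mass Φ k (-y) 0 γ ∂P := tsum_congr hstep
      _ = ∑' x, ∫⁻ γ, mass Φ k x 0 γ ∂P :=
          (Equiv.neg (Site d)).tsum_eq fun x => ∫⁻ γ, mass Φ k x 0 γ ∂P
      _ = _ := (lintegral_tsum fun x => hmeas x 0).symm
  have hne : ∀ γ : Config d, (clump γ k 0).Finite → ((clump γ k 0).ncard : ℝ≥0∞) ≠ 0 := by
    intro γ h
    rw [Nat.cast_ne_zero]
    exact Set.ncard_ne_zero_of_mem (mem_clump_self hd γ k 0) h
  rw [hprob, ← integral_toReal (AEMeasurable.tsum fun x => hmeas x 0)]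
  · refine integral_congr_ae ?_
    filter_upwards [hmax] with γ hγ
    obtain ⟨hf, hc⟩ := hγ k hk 0
    have hc' : {y ∈ clump γ k 0 | Φ γ y ∉ clump γ k 0}.ncard
        = (∑ᶠ y ∈ clump γ k 0, pm1 γ y).natAbs := by
      rw [Int.abs_eq_natAbs] at hc
      exact_mod_cast hc
    rw [mass_in hd Φ k γ 0 hf, hc', ENNReal.toReal_mul, ENNReal.toReal_inv, ENNReal.toReal_natCast,
      ENNReal.toReal_natCast, one_div, mul_comm]
  · filter_upwards [hmax] with γ hγ
    have hf := (hγ k hk 0).1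
    rw [mass_in hd Φ k γ 0 hf]
    exact ENNReal.mul_lt_top (ENNReal.natCast_lt_top _) (ENNReal.inv_lt_top.2 (pos_iff_ne_zero.2 (hne γ hf)))

end
end
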